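/- arXiv:1207.0232 — 2 statements merged into one kernel-verified Lean document; each statement's English description precedes it below -/
import Mathlib

section
/- For every integer k ≥ 1, Σ_{n ≤ x} ω(n) = x·log log x + B₁·x − c₀·x/log x − c₁·1!·x/(log x)² − ⋯ − c_{k-1}·(k-1)!·x/(log x)^k + O_k(x/(log x)^{k+1}) as x → ∞. -/
open Filter Real MeasureTheory
open scoped Classical

/-- The Mertens constant `B₁ = γ - Σ_p Σ_{k ≥ 2} 1/(k p^k)`. -/
noncomputable def mertensB1 : ℝ :=
  Real.eulerMascheroniConstant -
    ∑' p : Nat.Primes, ∑' k : ℕ, 1 / (((k + 2) : ℝ) * ((p : ℕ) : ℝ) ^ (k + 2))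

/-- `cconst n = (1/n!) ∫₁^∞ {u} (log u)^n / u² du`. -/
noncomputable def cconst (n : ℕ) : ℝ :=
  (1 / (n.factorial : ℝ)) * ∫ u in Set.Ioi (1:ℝ), Int.fract u * (Real.log u) ^ n / u ^ 2

noncomputable def zd (m : ℕ) (s : ℂ) : ℂ :=
  ((m:ℂ)+1)^(-s) + (((m:ℂ)+1)^(1-s) - (m:ℂ)^(1-s))/(s-1)

lemma zd_norm_le {m : ℕ} (hm : 1 ≤ m) {s : ℂ} (hs : 0 < s.re) (h1 : s ≠ 1) :
    ‖zd m s‖ ≤ ‖s‖ * (m:ℝ)^(-s.re-1) := by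
  have hm0 : (0:ℝ) < m := by exact_mod_cast hm
  have hs1 : s - 1 ≠ 0 := sub_ne_zero.mpr h1
  have hs0 : s ≠ 0 := by rintro rfl; simp at hs
  have key1 : ∀ u ∈ Set.Icc (m:ℝ) (m+1), ‖(((m:ℝ)+1:ℝ):ℂ)^(-s) - (u:ℂ)^(-s)‖ ≤ ‖s‖ * (m:ℝ)^(-s.re-1) := by
    intro u hu
    have := Convex.norm_image_sub_le_of_norm_hasDerivWithin_le (𝕜 := ℝ) (f := fun v : ℝ => (v:ℂ)^(-s)) (f' := fun v : ℝ => -s * (v:ℂ)^(-s-1)) (C := ‖s‖ * (m:ℝ)^(-s.re-1)) (s := Set.Icc (m:ℝ) (m+1)) (x := u) (y := m+1) ?_ ?_ (convex_Icc _ _) hu (by simp)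
    · refine this.trans ?_
      have : ‖(m:ℝ)+1-u‖ ≤ 1 := by
        rw [Real.norm_eq_abs, abs_le]; constructor <;> linarith [hu.1, hu.2]
      exact mul_le_of_le_one_right (by positivity) this
    · intro v hv
      have hv0 : 0 < v := lt_of_lt_of_le hm0 hv.1
      exact (hasDerivAt_ofReal_cpow_const (x := v) hv0.ne' (r := -s) (neg_ne_zero.mpr hs0)).hasDerivWithinAt
    · intro v hv
      have hv0 : 0 < v := lt_of_lt_of_le hm0 hv.1
      rw [norm_mul, norm_neg, Complex.norm_cpow_eq_rpow_re_of_pos hv0]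
      gcongr
      simp only [Complex.sub_re, Complex.neg_re, Complex.one_re]
      exact Real.rpow_le_rpow_of_nonpos hm0 hv.1 (by linarith)
  have := Convex.norm_image_sub_le_of_norm_hasDerivWithin_le (𝕜 := ℝ) (f := fun v : ℝ => (v:ℂ)^(1-s)/(s-1) + (v:ℂ) * (((m:ℝ)+1:ℝ):ℂ)^(-s)) (f' := fun v : ℝ => (((m:ℝ)+1:ℝ):ℂ)^(-s) - (v:ℂ)^(-s)) (C := ‖s‖ * (m:ℝ)^(-s.re-1)) (s := Set.Icc (m:ℝ) (m+1)) (x := m) (y := m+1) ?_ key1 (convex_Icc _ _) (by simp) (by simp)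
  · have e : zd m s = (fun v : ℝ => (v:ℂ)^(1-s)/(s-1) + (v:ℂ) * (((m:ℝ)+1:ℝ):ℂ)^(-s)) (m+1) - (fun v : ℝ => (v:ℂ)^(1-s)/(s-1) + (v:ℂ) * (((m:ℝ)+1:ℝ):ℂ)^(-s)) m := by
      simp only [zd]; push_cast; field_simp; ring
    rw [e]; simpa using this
  · intro v hv
    have hv0 : 0 < v := lt_of_lt_of_le hm0 hv.1
    have := hasDerivAt_ofReal_cpow_const (x := v) hv0.ne' (r := 1-s) (sub_ne_zero.mpr h1.symm)
    have h3 : HasDerivAt (fun v : ℝ => (v:ℂ) * (((m:ℝ)+1:ℝ):ℂ)^(-s)) (1 * (((m:ℝ)+1:ℝ):ℂ)^(-s)) v :=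
      (hasDerivAt_id v).ofReal_comp.mul_const _
    refine (((this.div_const (s-1)).add h3).hasDerivWithinAt (s := Set.Icc (m:ℝ) (m+1))).congr_deriv ?_
    rw [show (1:ℂ)-s-1 = -s by ring]
    field_simp
    ring

lemma zd_summable (N : ℕ) (hN : 1 ≤ N) {s : ℂ} (hs : 0 < s.re) (h1 : s ≠ 1) :
    Summable fun n => zd (N+n) s := by
  have h : Summable fun n : ℕ => ‖s‖ * ((n:ℝ))^(-s.re-1) :=
    (Real.summable_nat_rpow.mpr (by linarith)).mul_left _
  have h' := (summable_nat_add_iff N).mpr h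
  refine Summable.of_norm_bounded h' fun n => ?_
  rw [add_comm N n]
  exact zd_norm_le (by omega) hs h1

noncomputable def zf (N : ℕ) (s : ℂ) : ℂ :=
  ∑ n ∈ Finset.range N, ((n:ℂ)+1)^(-s) + (N:ℂ)^(1-s)/(s-1) + ∑' n, zd (N+n) s

lemma zf_eq_of_one_lt (N : ℕ) (hN : 1 ≤ N) {s : ℂ} (hs : 1 < s.re) : riemannZeta s = zf N s := by
  have h1 : s ≠ 1 := by rintro rfl; simp at hs
  have hs1 : s - 1 ≠ 0 := sub_ne_zero.mpr h1
  have hsum := (zd_summable N hN (by linarith) h1).hasSum.tendsto_sum_nat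
  have hz := zeta_eq_tsum_one_div_nat_add_one_cpow hs
  have hz' : Summable fun n : ℕ => 1 / ((n:ℂ)+1)^s := by
    have := (summable_nat_add_iff 1).mpr (Complex.summable_one_div_nat_cpow.mpr hs)
    simpa using this
  have hz2 := hz'.hasSum.tendsto_sum_nat
  rw [← hz] at hz2
  have part : ∀ M, ∑ n ∈ Finset.range M, zd (N+n) s = ∑ n ∈ Finset.range (N+M), 1/((n:ℂ)+1)^s - ∑ n ∈ Finset.range N, ((n:ℂ)+1)^(-s) + (((N+M:ℕ):ℂ)^(1-s) - (N:ℂ)^(1-s))/(s-1) := by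
    intro M
    induction M with
    | zero => simp [Complex.cpow_neg]
    | succ M ih =>
      rw [Finset.sum_range_succ, ih, ← add_assoc, Finset.sum_range_succ]
      simp only [zd, Complex.cpow_neg]
      push_cast
      field_simp
      ring
  have hlim : Tendsto (fun M : ℕ => ((N+M:ℕ):ℂ)^(1-s)) atTop (nhds 0) := by
    rw [tendsto_zero_iff_norm_tendsto_zero]
    have h2 : Tendsto (fun x : ℝ => x^(-(s.re-1))) atTop (nhds 0) := tendsto_rpow_neg_atTop (by linarith)
    have h3 : Tendsto (fun M : ℕ => ((N+M:ℕ):ℝ)) atTop atTop :=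
      tendsto_natCast_atTop_atTop.comp (tendsto_atTop_mono (fun M => Nat.le_add_left M N) tendsto_id)
    refine (h2.comp h3).congr fun M => ?_
    rw [Complex.norm_natCast_cpow_of_pos (by omega)]
    simp
  have hA : Tendsto (fun M => ∑ n ∈ Finset.range M, zd (N+n) s) atTop
      (nhds (riemannZeta s - ∑ n ∈ Finset.range N, ((n:ℂ)+1)^(-s) + (0 - (N:ℂ)^(1-s))/(s-1))) := by
    simp_rw [part]
    refine Tendsto.add (Tendsto.sub ?_ tendsto_const_nhds) ((hlim.sub_const _).div_const _)
    exact hz2.comp (tendsto_atTop_mono (fun M => Nat.le_add_left M N) tendsto_id)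
  have := tendsto_nhds_unique hA hsum
  rw [zf, ← this]; ring

lemma zd_diff (m : ℕ) (hm : 1 ≤ m) {s : ℂ} (h1 : s ≠ 1) : DifferentiableAt ℂ (zd m) s := by
  have hs1 : s - 1 ≠ 0 := sub_ne_zero.mpr h1
  have hm0 : (m:ℂ) ≠ 0 := by exact_mod_cast (by omega : m ≠ 0)
  have hm1 : (m:ℂ)+1 ≠ 0 := by exact_mod_cast (by omega : m+1 ≠ 0)
  unfold zd
  refine DifferentiableAt.add ?_ (DifferentiableAt.div (DifferentiableAt.sub ?_ ?_) (by fun_prop) hs1)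
  · exact DifferentiableAt.const_cpow (by fun_prop) (Or.inl hm1)
  · exact DifferentiableAt.const_cpow (by fun_prop) (Or.inl hm1)
  · exact DifferentiableAt.const_cpow (by fun_prop) (Or.inl hm0)

lemma zf_eq (N : ℕ) (hN : 1 ≤ N) {s₀ : ℂ} (hs : 0 < s₀.re) (ht : 0 < s₀.im) :
    riemannZeta s₀ = zf N s₀ := by
  set δ := s₀.re/2
  set R := ‖s₀‖ + 10
  set U : Set ℂ := {s | δ < s.re} ∩ {s | 0 < s.im} ∩ Metric.ball 0 R with hU
  have hUo : IsOpen U := ((isOpen_lt continuous_const Complex.continuous_re).inter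
    (isOpen_lt continuous_const Complex.continuous_im)).inter Metric.isOpen_ball
  have hUc : Convex ℝ U := ((convex_halfSpace_re_gt δ).inter (convex_halfSpace_im_gt 0)).inter (convex_ball _ _)
  have hne : ∀ s ∈ U, s ≠ 1 := by
    rintro s hs rfl
    simp [hU] at hs
  have d1 : DifferentiableOn ℂ riemannZeta U := fun s hs =>
    (differentiableAt_riemannZeta (hne s hs)).differentiableWithinAt
  have hδ : 0 < δ := by simp only [δ]; linarith
  have d2 : DifferentiableOn ℂ (zf N) U := by
    have : DifferentiableOn ℂ (fun s => ∑' n, zd (N+n) s) U := by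
      refine DifferentiableOn.mono (Complex.differentiableOn_tsum_of_summable_norm (u := fun n : ℕ => R * ((n+N:ℕ):ℝ)^(-δ-1)) ?_ ?_ hUo ?_) subset_rfl
      · exact (summable_nat_add_iff N).mpr ((Real.summable_nat_rpow.mpr (by linarith)).mul_left _)
      · intro n s hs
        exact (zd_diff _ (by omega) (hne s hs)).differentiableWithinAt
      · intro n s hs
        have h1 := hs.1.1
        have h2 := hs.2
        simp only [Set.mem_ofPred_eq, Metric.mem_ball, dist_zero_right] at h1 h2
        refine (zd_norm_le (by omega) (by linarith) (hne s hs)).trans ?_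
        rw [add_comm N n]
        have : (1:ℝ) ≤ ((n+N:ℕ):ℝ) := by exact_mod_cast (by omega)
        gcongr
    intro s hs
    have hs1 : s - 1 ≠ 0 := sub_ne_zero.mpr (hne s hs)
    have hm0 : (N:ℂ) ≠ 0 := by exact_mod_cast (by omega : N ≠ 0)
    refine DifferentiableWithinAt.add (DifferentiableWithinAt.add ?_ ?_) (this s hs)
    · refine DifferentiableAt.differentiableWithinAt (DifferentiableAt.fun_sum fun n _ => ?_)
      refine DifferentiableAt.const_cpow (by fun_prop) (Or.inl ?_)
      exact_mod_cast (by omega : n+1 ≠ 0)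
    · refine DifferentiableAt.differentiableWithinAt (DifferentiableAt.div ?_ (by fun_prop) hs1)
      exact DifferentiableAt.const_cpow (by fun_prop) (Or.inl hm0)
  have hz : ((s₀.re + 2 : ℝ) + Complex.I) ∈ U := by
    refine ⟨⟨?_, by simp⟩, ?_⟩
    · simp [δ]; linarith
    · simp only [Metric.mem_ball, dist_zero_right, R]
      have := norm_add_le ((s₀.re + 2 : ℝ) : ℂ) Complex.I
      have h2 : ‖((s₀.re + 2 : ℝ) : ℂ)‖ = s₀.re + 2 := by
        rw [Complex.norm_real, Real.norm_eq_abs, abs_of_pos (by linarith)]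
      have := Complex.re_le_norm s₀
      rw [Complex.norm_I] at *
      linarith
  have hev : riemannZeta =ᶠ[nhds (((s₀.re + 2 : ℝ):ℂ) + Complex.I)] zf N := by
    have : {s : ℂ | 1 < s.re} ∈ nhds (((s₀.re + 2 : ℝ):ℂ) + Complex.I) :=
      (isOpen_lt continuous_const Complex.continuous_re).mem_nhds (by simp; linarith)
    filter_upwards [this] with s hs using zf_eq_of_one_lt N hN hs
  exact (d1.analyticOnNhd hUo).eqOn_of_preconnected_of_eventuallyEq (d2.analyticOnNhd hUo)
    hUc.isPreconnected hz hev ⟨⟨by simp [δ]; linarith, ht⟩, by simp [R]⟩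

lemma zeta_bound_pos {ε : ℝ} (hε : 0 < ε) (hε2 : ε ≤ 1/4) : ∃ C > 0, ∀ s : ℂ, 1 - ε ≤ s.re → s.re ≤ 4 →
    1 ≤ s.im → ‖riemannZeta s‖ ≤ C * s.im ^ (2*ε) := by
  have hsm : Summable fun n : ℕ => ((n:ℝ))^(-1-ε) := Real.summable_nat_rpow.mpr (by linarith)
  set K := ∑' n : ℕ, ((n:ℝ))^(-1-ε) with hK
  have hK0 : 0 ≤ K := tsum_nonneg fun n => by positivity
  refine ⟨4 * (1 + 1/ε + 4 + 5 * K), by positivity, fun s h1 h2 ht => ?_⟩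
  set t := s.im with htd
  have hs1 : s ≠ 1 := by rintro rfl; simp [htd] at ht; linarith
  have hσ : 0 < s.re := by linarith
  set N := ⌈t⌉₊ with hN
  have hN1 : t ≤ N := Nat.le_ceil t
  have hN2 : (N:ℝ) ≤ 2 * t := by have := Nat.ceil_lt_add_one (by linarith : 0 ≤ t); linarith
  have hNp : 1 ≤ N := by
    have : (1:ℝ) ≤ N := by linarith
    exact_mod_cast this
  have hN1r : (1:ℝ) ≤ N := by exact_mod_cast hNp
  have hNpow : (N:ℝ)^(2*ε) ≤ 4 * t^(2*ε) := by
    calc (N:ℝ)^(2*ε) ≤ (2*t)^(2*ε) := by gcongr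
      _ = 2^(2*ε) * t^(2*ε) := Real.mul_rpow (by norm_num) (by linarith)
      _ ≤ 4 * t^(2*ε) := by
        gcongr
        calc (2:ℝ)^(2*ε) ≤ 2^(2:ℝ) := Real.rpow_le_rpow_of_exponent_le (by norm_num) (by linarith)
          _ = 4 := by norm_num
  rw [zf_eq N hNp hσ (by linarith), zf]
  have b1 : ‖∑ n ∈ Finset.range N, ((n:ℂ)+1)^(-s)‖ ≤ (1+1/ε) * (N:ℝ)^(2*ε) := by
    calc _ ≤ ∑ n ∈ Finset.range N, ‖((n:ℂ)+1)^(-s)‖ := norm_sum_le _ _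
      _ ≤ ∑ n ∈ Finset.range N, (N:ℝ)^ε * ((n:ℝ)+1)⁻¹ := by
        refine Finset.sum_le_sum fun n hn => ?_
        have hn' : (n:ℝ)+1 ≤ N := by
          have := Finset.mem_range.mp hn
          exact_mod_cast this
        rw [show (n:ℂ)+1 = ((n+1:ℕ):ℂ) by push_cast; rfl, Complex.norm_natCast_cpow_of_pos (by omega)]
        push_cast
        calc ((n:ℝ)+1)^((-s).re) ≤ ((n:ℝ)+1)^(ε + (-1)) := by
              apply Real.rpow_le_rpow_of_exponent_le
              · linarith [(Nat.cast_nonneg n : (0:ℝ) ≤ n)]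
              · simp; linarith
          _ = ((n:ℝ)+1)^ε * ((n:ℝ)+1)⁻¹ := by
              rw [Real.rpow_add (by positivity), Real.rpow_neg_one]
          _ ≤ _ := by gcongr
      _ = (N:ℝ)^ε * (harmonic N : ℝ) := by
        rw [← Finset.mul_sum]; simp [harmonic]
      _ ≤ (N:ℝ)^ε * (1 + Real.log N) := by gcongr; exact harmonic_le_one_add_log N
      _ ≤ (N:ℝ)^ε * ((1+1/ε) * (N:ℝ)^ε) := by
        gcongr
        have := Real.log_le_rpow_div (by linarith : (0:ℝ) ≤ N) hε
        have h3 : 1 ≤ (N:ℝ)^ε := Real.one_le_rpow hN1r hε.le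
        have : (1+1/ε) * (N:ℝ)^ε = (N:ℝ)^ε + (N:ℝ)^ε/ε := by ring
        linarith
      _ = _ := by
        rw [two_mul, Real.rpow_add (by linarith)]; ring
  have b2 : ‖(N:ℂ)^(1-s)/(s-1)‖ ≤ 4 * (N:ℝ)^(2*ε) := by
    rw [norm_div, Complex.norm_natCast_cpow_of_pos (by omega)]
    have h4 : 1 ≤ ‖s-1‖ := by
      have := Complex.abs_im_le_norm (s-1)
      simp at this
      have h5 := le_abs_self s.im
      linarith
    have h6 : (N:ℝ)^((1-s).re) ≤ (N:ℝ)^(2*ε) :=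
      Real.rpow_le_rpow_of_exponent_le hN1r (by simp; linarith)
    calc _ ≤ (N:ℝ)^((1-s).re) := div_le_self (by positivity) h4
      _ ≤ _ := by nlinarith [Real.rpow_nonneg (by linarith : (0:ℝ) ≤ N) (2*ε)]
  have hns : ‖s‖ ≤ 5 * t := by
    have := Complex.norm_le_abs_re_add_abs_im s
    rw [abs_of_pos hσ, abs_of_pos (by linarith : 0 < s.im)] at this
    linarith
  have b3 : ‖∑' n, zd (N+n) s‖ ≤ 5 * K * (N:ℝ)^(2*ε) := by
    have hs2 : Summable fun n : ℕ => ‖s‖ * (N:ℝ)^(2*ε-1) * (((n+N:ℕ):ℝ))^(-1-ε) :=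
      ((summable_nat_add_iff N).mpr hsm).mul_left _
    have hle : ∀ n, ‖zd (N+n) s‖ ≤ ‖s‖ * (N:ℝ)^(2*ε-1) * (((n+N:ℕ):ℝ))^(-1-ε) := by
      intro n
      rw [add_comm N n]
      refine (zd_norm_le (by omega) hσ hs1).trans ?_
      rw [mul_assoc]
      gcongr
      have hge : (N:ℝ) ≤ ((n+N:ℕ):ℝ) := by exact_mod_cast (by omega)
      calc ((n+N:ℕ):ℝ)^(-s.re-1) ≤ ((n+N:ℕ):ℝ)^((2*ε-1)+(-1-ε)) :=
            Real.rpow_le_rpow_of_exponent_le (by linarith) (by linarith)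
        _ = ((n+N:ℕ):ℝ)^(2*ε-1) * ((n+N:ℕ):ℝ)^(-1-ε) := Real.rpow_add (lt_of_lt_of_le (by linarith : (0:ℝ) < N) hge) _ _
        _ ≤ _ := by
          refine mul_le_mul_of_nonneg_right ?_ (by positivity)
          exact Real.rpow_le_rpow_of_nonpos (by linarith) hge (by linarith)
    have := tsum_of_norm_bounded hs2.hasSum hle
    refine this.trans ?_
    rw [tsum_mul_left]
    have hKK : ∑' n : ℕ, (((n+N:ℕ):ℝ))^(-1-ε) ≤ K := by
      rw [hK, ← hsm.sum_add_tsum_nat_add N]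
      have : 0 ≤ ∑ i ∈ Finset.range N, (i:ℝ)^(-1-ε) := Finset.sum_nonneg fun i _ => by positivity
      linarith
    calc _ ≤ (5 * N) * (N:ℝ)^(2*ε-1) * K := by
          gcongr
          linarith
      _ = _ := by
        rw [Real.rpow_sub_one (by linarith)]; field_simp
  calc _ ≤ (1+1/ε) * (N:ℝ)^(2*ε) + 4 * (N:ℝ)^(2*ε) + 5 * K * (N:ℝ)^(2*ε) :=
        (norm_add_le _ _).trans (add_le_add ((norm_add_le _ _).trans (add_le_add b1 b2)) b3)
    _ = (1+1/ε+4+5*K) * (N:ℝ)^(2*ε) := by ring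
    _ ≤ (1+1/ε+4+5*K) * (4 * t^(2*ε)) := by gcongr
    _ = _ := by ring

theorem zeta_bound {ε : ℝ} (hε : 0 < ε) (hε2 : ε ≤ 1/4) : ∃ C > 0, ∀ s : ℂ, 1 - ε ≤ s.re → s.re ≤ 4 →
    1 ≤ |s.im| → ‖riemannZeta s‖ ≤ C * |s.im| ^ (2*ε) := by
  obtain ⟨C, hC, h⟩ := zeta_bound_pos hε hε2
  refine ⟨C, hC, fun s h1 h2 h3 => ?_⟩
  rcases le_or_gt 0 s.im with hs | hs
  · rw [abs_of_nonneg hs] at *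
    exact h s h1 h2 h3
  · rw [abs_of_neg hs] at *
    have := h (starRingEnd ℂ s) (by simpa using h1) (by simpa using h2) (by simpa using h3)
    rw [riemannZeta_conj] at this
    simpa using this

lemma zeta_bound2 {a : ℝ} (ha : 0 < a) (ha2 : a ≤ 1/2) : ∃ C > 0, ∀ s : ℂ, 1 - a/2 ≤ s.re → s.re ≤ 4 →
    1 ≤ |s.im| → ‖riemannZeta s‖ ≤ C * |s.im| ^ a := by
  obtain ⟨C, hC, h⟩ := zeta_bound (ε := a/2) (by linarith) (by linarith)
  exact ⟨C, hC, fun s h1 h2 h3 => by simpa [mul_div_cancel₀] using h s h1 h2 h3⟩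

lemma im_close {z s : ℂ} {r : ℝ} (h : ‖z - s‖ ≤ r) : |z.im| ≤ |s.im| + r ∧ |s.im| ≤ |z.im| + r ∧
    s.re - r ≤ z.re ∧ z.re ≤ s.re + r := by
  have h1 := Complex.abs_im_le_norm (z - s)
  have h2 := Complex.abs_re_le_norm (z - s)
  simp only [Complex.sub_im, Complex.sub_re] at h1 h2
  have h3 := abs_le.mp (h2.trans h)
  have h4 := abs_sub_abs_le_abs_sub z.im s.im
  have h5 := abs_sub_abs_le_abs_sub s.im z.im
  rw [abs_sub_comm] at h5
  refine ⟨by linarith, by linarith, by linarith, by linarith⟩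

lemma ne_one_of_im {s : ℂ} (h : 1 ≤ |s.im|) : s ≠ 1 := by
  rintro rfl; simp at h; linarith

lemma zeta_deriv_bound {a : ℝ} (ha : 0 < a) (ha2 : a ≤ 1/2) : ∃ C > 0, ∀ s : ℂ, 1 - a/4 ≤ s.re → s.re ≤ 3 →
    2 ≤ |s.im| → ‖deriv riemannZeta s‖ ≤ C * |s.im| ^ a := by
  obtain ⟨C, hC, h⟩ := zeta_bound2 ha ha2
  refine ⟨2*C/(a/4), by positivity, fun s h1 h2 h3 => ?_⟩
  have hr : 0 < a/4 := by linarith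
  have := Complex.norm_deriv_le_of_forall_mem_sphere_norm_le (f := riemannZeta) (c := s) (C := 2 * C * |s.im|^a) hr ?_ ?_
  · refine this.trans (le_of_eq ?_); ring
  · refine DifferentiableOn.diffContOnCl fun z hz => (differentiableAt_riemannZeta ?_).differentiableWithinAt
    rw [closure_ball _ hr.ne', mem_closedBall_iff_norm] at hz
    have := im_close hz
    exact ne_one_of_im (by linarith)
  · intro z hz
    rw [mem_sphere_iff_norm] at hz
    obtain ⟨e1, e2, e3, e4⟩ := im_close hz.le
    refine (h z (by linarith) (by linarith) (by linarith)).trans ?_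
    rw [mul_assoc, mul_left_comm]
    gcongr
    calc |z.im|^a ≤ (2*|s.im|)^a := by gcongr; linarith
      _ = 2^a * |s.im|^a := Real.mul_rpow (by norm_num) (abs_nonneg _)
      _ ≤ 2 * |s.im|^a := by
        gcongr
        calc (2:ℝ)^a ≤ 2^(1:ℝ) := Real.rpow_le_rpow_of_exponent_le (by norm_num) (by linarith)
          _ = 2 := by norm_num

lemma zeta_341 {x : ℝ} (hx : 0 < x) (y : ℝ) :
    1 ≤ ‖riemannZeta (1+x)‖^3 * ‖riemannZeta (1+x+Complex.I*y)‖^4 * ‖riemannZeta (1+x+2*Complex.I*y)‖ := by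
  have := DirichletCharacter.norm_LFunction_product_ge_one (N := 1) 1 hx y
  simp only [DirichletCharacter.LFunctionTrivChar, DirichletCharacter.LFunction_modOne_eq, norm_mul, norm_pow] at this
  exact this

lemma zeta_real_bound : ∃ K > 0, ∀ x : ℝ, 0 < x → x ≤ 1 → ‖riemannZeta (1+x)‖ ≤ K / x := by
  have hc : ContinuousOn (fun x : ℝ => riemannZeta₁ (1+x)) (Set.Icc 0 1) := by
    have := differentiable_riemannZeta₁.continuous
    fun_prop
  obtain ⟨K, hK⟩ := isCompact_Icc.exists_bound_of_continuousOn hc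
  refine ⟨max K 1, by positivity, fun x h0 h1 => ?_⟩
  have hne : (1:ℂ)+x ≠ 1 := by simpa using h0.ne'
  rw [riemannZeta_eq_inv_sub_mul hne, norm_mul]
  have h2 := hK x ⟨h0.le, h1⟩
  have : ‖((1:ℂ)+x-1)⁻¹‖ = x⁻¹ := by
    simp [abs_of_pos h0]
  rw [this, div_eq_inv_mul]
  gcongr
  exact h2.trans (le_max_left _ _)

lemma zeta_lower {a : ℝ} (ha : 0 < a) (ha2 : a ≤ 1/2) : ∃ d > 0, d ≤ 1/4 ∧ ∃ c > 0, ∀ s : ℂ, 2 ≤ |s.im| →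
    1 - d * |s.im|^(-5*a) ≤ s.re → s.re ≤ 2 → c * |s.im|^(-4*a) ≤ ‖riemannZeta s‖ := by
  obtain ⟨C, hC, hb⟩ := zeta_bound2 ha ha2
  obtain ⟨D, hD, hd⟩ := zeta_deriv_bound ha ha2
  obtain ⟨K, hK, hk⟩ := zeta_real_bound
  set M := K^3 * (2*C) with hM
  have hMp : 0 < M := by positivity
  set d := min (1/(M*(4*D)^4)) (a/8) with hdd
  have hdp : 0 < d := lt_min (by positivity) (by linarith)
  have hda : d ≤ a/8 := min_le_right _ _
  have hdM : d * (M*(4*D)^4) ≤ 1 := by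
    have : d ≤ 1/(M*(4*D)^4) := min_le_left _ _
    rwa [le_div_iff₀ (by positivity)] at this
  have far : ∀ x t : ℝ, 2 ≤ |t| → d * |t|^(-5*a) ≤ x → x ≤ 1 →
      4*d*D*|t|^(-4*a) ≤ ‖riemannZeta (1+x+Complex.I*t)‖ := by
    intro x t ht hx hx1
    have htp : 0 < |t| := by linarith
    have hη : 0 < d * |t|^(-5*a) := by positivity
    have hx0 : 0 < x := by linarith
    by_contra! hcon
    set Y := ‖riemannZeta (1+x+Complex.I*t)‖
    have h1 := zeta_341 hx0 t
    have h2 := hk x hx0 hx1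
    have h3 := hb (1+x+2*Complex.I*t) (by simp; linarith) (by simp; linarith) (by
      simp [abs_mul]; linarith)
    have h4 : |(1+x+2*Complex.I*t : ℂ).im| = 2*|t| := by simp [abs_mul]
    rw [h4, Real.mul_rpow (by norm_num) htp.le] at h3
    have h5 : (2:ℝ)^a ≤ 2 := by
      calc (2:ℝ)^a ≤ 2^(1:ℝ) := Real.rpow_le_rpow_of_exponent_le (by norm_num) (by linarith)
          _ = 2 := by norm_num
    have h6 : 1 < (K/x)^3 * (4*d*D*|t|^(-4*a))^4 * (C*(2*|t|^a)) := by
      refine lt_of_le_of_lt h1 ?_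
      calc _ ≤ (K/x)^3 * Y^4 * (C*(2*|t|^a)) := by
            gcongr
            exact h3.trans (by gcongr)
        _ < _ := by gcongr
    have h7 : (K/x)^3 ≤ (K/(d * |t|^(-5*a)))^3 := by gcongr
    have h8 : 1 < (K/(d * |t|^(-5*a)))^3 * (4*d*D*|t|^(-4*a))^4 * (C*(2*|t|^a)) :=
      lt_of_lt_of_le h6 (by gcongr)
    have e1 : (|t|^(-4*a)) = ((|t|^a)^4)⁻¹ := by
      rw [show -4*a = -(a*(4:ℕ)) by push_cast; ring, Real.rpow_neg htp.le, Real.rpow_mul_natCast htp.le]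
    have e2 : (|t|^(-5*a)) = ((|t|^a)^5)⁻¹ := by
      rw [show -5*a = -(a*(5:ℕ)) by push_cast; ring, Real.rpow_neg htp.le, Real.rpow_mul_natCast htp.le]
    rw [e1, e2] at h8
    have hu : 0 < |t|^a := by positivity
    set u := |t|^a
    have : (K/(d * (u^5)⁻¹))^3 * (4*d*D*(u^4)⁻¹)^4 * (C*(2*u)) = d * (M*(4*D)^4) := by
      rw [hM]; field_simp
    linarith
  refine ⟨d, hdp, by linarith, 2*d*D, by positivity, fun s ht h1 h2 => ?_⟩
  have htp : 0 < |s.im| := by linarith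
  set η := d * |s.im|^(-5*a) with hη
  have hη0 : 0 < η := by positivity
  have hη1 : η ≤ d := by
    have : |s.im|^(-5*a) ≤ 1 := Real.rpow_le_one_of_one_le_of_nonpos (by linarith) (by linarith)
    nlinarith
  have hmono : 2*d*D*|s.im|^(-4*a) ≤ 4*d*D*|s.im|^(-4*a) := by gcongr; norm_num
  rcases le_total (1+η) s.re with h | h
  · have := far (s.re-1) s.im ht (by linarith) (by linarith)
    rw [show (1:ℂ)+((s.re-1:ℝ):ℂ)+Complex.I*s.im = s by
      apply Complex.ext <;> simp] at this
    linarith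
  · have h3 := far η s.im ht le_rfl (by linarith)
    set w : ℂ := 1+η+Complex.I*s.im with hw
    have hseg : ‖riemannZeta w - riemannZeta s‖ ≤ D * |s.im|^a * ‖w - s‖ := by
      have hcv : Convex ℝ ({z : ℂ | 1 - a/4 ≤ z.re} ∩ {z : ℂ | z.re ≤ 3} ∩ {z : ℂ | z.im = s.im}) := by
        refine ((convex_halfSpace_re_ge _).inter (convex_halfSpace_re_le _)).inter ?_
        have : {z : ℂ | z.im = s.im} = Complex.imLm ⁻¹' {s.im} := by ext; simp
        rw [this]
        exact (convex_singleton _).linear_preimage _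
      refine hcv.norm_image_sub_le_of_norm_deriv_le (𝕜 := ℂ) (f := riemannZeta) ?_ ?_ ?_ ?_
      · rintro z ⟨-, hz⟩
        refine differentiableAt_riemannZeta (ne_one_of_im ?_)
        simp only [Set.mem_ofPred_eq] at hz
        rw [hz]; linarith
      · rintro z ⟨⟨hz1, hz2⟩, hz⟩
        simp only [Set.mem_ofPred_eq] at hz hz1 hz2
        rw [← hz]
        exact hd z hz1 hz2 (by rw [hz]; exact ht)
      · exact ⟨⟨by simp; linarith, by simp; linarith⟩, by simp⟩
      · exact ⟨⟨by simp [w]; linarith, by simp [w]; linarith⟩, by simp [w]⟩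
    have hws : ‖w - s‖ ≤ 2*η := by
      have : w - s = ((1+η-s.re:ℝ):ℂ) := by apply Complex.ext <;> simp [w]
      rw [this, Complex.norm_real, Real.norm_eq_abs, abs_le]
      constructor <;> linarith
    have h4 : D * |s.im|^a * ‖w - s‖ ≤ 2*d*D*|s.im|^(-4*a) := by
      calc _ ≤ D * |s.im|^a * (2*η) := by gcongr
        _ = 2*d*D*(|s.im|^a * |s.im|^(-5*a)) := by rw [hη]; ring
        _ = _ := by rw [← Real.rpow_add htp]; ring_nf
    have h5 := norm_sub_norm_le (riemannZeta w) (riemannZeta s)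
    linarith

noncomputable def zQ (s : ℂ) : ℂ := - deriv riemannZeta₁ s / riemannZeta₁ s
noncomputable def zF (s : ℂ) : ℂ := zQ s / (s * (s+1))

def zU : Set ℂ := {s | riemannZeta₁ s ≠ 0 ∧ s ≠ 0 ∧ s + 1 ≠ 0}

lemma zU_open : IsOpen zU := by
  have h1 := differentiable_riemannZeta₁.continuous
  exact (isOpen_ne_fun h1 continuous_const).inter ((isOpen_ne_fun continuous_id continuous_const).inter
    (isOpen_ne_fun (by fun_prop) continuous_const))

lemma zF_diff : DifferentiableOn ℂ zF zU := by
  intro s hs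
  obtain ⟨h1, h2, h3⟩ := hs
  refine DifferentiableAt.differentiableWithinAt ?_
  unfold zF zQ
  have hd : DifferentiableAt ℂ (deriv riemannZeta₁) s :=
    (differentiable_riemannZeta₁.analyticAt s).deriv.differentiableAt
  exact (hd.neg.div differentiable_riemannZeta₁.differentiableAt h1).div (by fun_prop) (mul_ne_zero h2 h3)

lemma zeta1_eq {s : ℂ} (hs : s ≠ 1) : riemannZeta₁ s = (s-1) * riemannZeta s := by
  have : s - 1 ≠ 0 := sub_ne_zero.mpr hs
  rw [riemannZeta_eq_inv_sub_mul hs]; field_simp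

lemma mem_zU {s : ℂ} (hs : 1 ≤ s.re) : s ∈ zU := by
  refine ⟨?_, ?_, ?_⟩
  · by_cases h : s = 1
    · simp [h]
    · rw [zeta1_eq h]
      exact mul_ne_zero (sub_ne_zero.mpr h) (riemannZeta_ne_zero_of_one_le_re hs)
  · rintro rfl; simp at hs; linarith
  · intro h
    have := congrArg Complex.re h
    simp at this; linarith

lemma zQ_eq {s : ℂ} (hs : s ≠ 1) (hz : riemannZeta s ≠ 0) :
    zQ s = - deriv riemannZeta s / riemannZeta s - 1/(s-1) := by
  have h1 : s - 1 ≠ 0 := sub_ne_zero.mpr hs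
  have hd : deriv riemannZeta₁ s = riemannZeta s + (s-1) * deriv riemannZeta s := by
    have : riemannZeta₁ =ᶠ[nhds s] fun s => (s-1) * riemannZeta s := by
      filter_upwards [isOpen_ne.mem_nhds hs] with z hz using zeta1_eq hz
    rw [this.deriv_eq, deriv_fun_mul (by fun_prop) (differentiableAt_riemannZeta hs)]
    simp
  rw [zQ, hd, zeta1_eq hs]
  field_simp
  ring

lemma zF_bound {a : ℝ} (ha : 0 < a) (ha2 : a ≤ 1/2) : ∃ d > 0, d ≤ 1/4 ∧ ∃ C > 0, ∀ s : ℂ, 2 ≤ |s.im| →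
    1 - d * |s.im|^(-5*a) ≤ s.re → s.re ≤ 2 → s ∈ zU ∧ ‖zF s‖ ≤ C * |s.im|^(5*a-2) := by
  obtain ⟨d, hd, hd4, c, hc, hl⟩ := zeta_lower ha ha2
  obtain ⟨D, hD, hdb⟩ := zeta_deriv_bound ha ha2
  refine ⟨min d (a/4), lt_min hd (by linarith), (min_le_left _ _).trans hd4, D/c+1, by positivity, fun s ht h1 h2 => ?_⟩
  have htp : 0 < |s.im| := by linarith
  have hpw : |s.im|^(-5*a) ≤ 1 := Real.rpow_le_one_of_one_le_of_nonpos (by linarith) (by linarith)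
  have hp0 : 0 < |s.im|^(-5*a) := by positivity
  have hσ1 : 1 - d * |s.im|^(-5*a) ≤ s.re := by
    have : min d (a/4) * |s.im|^(-5*a) ≤ d * |s.im|^(-5*a) := by gcongr; exact min_le_left _ _
    linarith
  have hσ2 : 1 - a/4 ≤ s.re := by
    have h3 : min d (a/4) ≤ a/4 := min_le_right _ _
    have h4 : 0 < min d (a/4) := lt_min hd (by linarith)
    nlinarith
  have hlow := hl s ht hσ1 h2
  have hs1 : s ≠ 1 := ne_one_of_im (by linarith)
  have hz : riemannZeta s ≠ 0 := by
    intro h; rw [h, norm_zero] at hlow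
    have : 0 < c * |s.im|^(-4*a) := by positivity
    linarith
  have hn0 : |s.im| ≤ ‖s‖ := Complex.abs_im_le_norm s
  have hn1 : |s.im| ≤ ‖s+1‖ := by simpa using Complex.abs_im_le_norm (s+1)
  have hn2 : |s.im| ≤ ‖s-1‖ := by simpa using Complex.abs_im_le_norm (s-1)
  refine ⟨⟨?_, ?_, ?_⟩, ?_⟩
  · rw [zeta1_eq hs1]; exact mul_ne_zero (sub_ne_zero.mpr hs1) hz
  · exact norm_pos_iff.mp (by linarith)
  · exact norm_pos_iff.mp (by linarith)
  · rw [zF, zQ_eq hs1 hz, norm_div, norm_mul]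
    have hone : 1 ≤ |s.im|^(5*a) := Real.one_le_rpow (by linarith) (by linarith)
    have b1 : ‖-deriv riemannZeta s / riemannZeta s - 1 / (s - 1)‖ ≤ (D/c+1) * |s.im|^(5*a) := by
      refine (norm_sub_le _ _).trans ?_
      rw [norm_div, norm_div, norm_neg, norm_one]
      have b2 : ‖deriv riemannZeta s‖ / ‖riemannZeta s‖ ≤ (D * |s.im|^a) / (c * |s.im|^(-4*a)) := by
        gcongr
        exact hdb s hσ2 (by linarith) ht
      have b3 : (D * |s.im|^a) / (c * |s.im|^(-4*a)) = D/c * |s.im|^(5*a) := by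
        rw [show 5*a = a - (-4*a) by ring, Real.rpow_sub htp]; field_simp
      have b4 : 1/‖s-1‖ ≤ 1 := by
        rw [div_le_one (by linarith)]; linarith
      linarith
    calc _ ≤ ((D/c+1) * |s.im|^(5*a)) / (|s.im| * |s.im|) := by gcongr
      _ = _ := by
        rw [Real.rpow_sub htp, Real.rpow_two]; ring

theorem zF_deriv_bound (k : ℕ) : ∃ C > 0, ∀ s : ℂ, 1 ≤ s.re → s.re ≤ 3/2 →
    ‖iteratedDeriv k zF s‖ ≤ C * (1+|s.im|)^(-(3/2:ℝ)) := by
  have hana : AnalyticOnNhd ℂ (iteratedDeriv k zF) zU := by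
    rw [iteratedDeriv_eq_iterate]
    exact (zF_diff.analyticOnNhd zU_open).iterated_deriv k
  have hcpt : IsCompact (Set.Icc (1:ℝ) (3/2) ×ℂ Set.Icc (-4:ℝ) 4) := isCompact_Icc.reProdIm isCompact_Icc
  obtain ⟨C1, hC1⟩ := hcpt.exists_bound_of_continuousOn (hana.continuousOn.mono (fun s hs => mem_zU hs.1.1))
  set a : ℝ := 1/(10*(k+1)) with ha_def
  have ha : 0 < a := by positivity
  have hak : 5*a*(k+1) = 1/2 := by rw [ha_def]; field_simp; norm_num
  have ha2 : a ≤ 1/2 := by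
    have : (0:ℝ) ≤ k := Nat.cast_nonneg k
    nlinarith
  obtain ⟨d, hd, hd4, C, hC, hF⟩ := zF_bound ha ha2
  have hmin : ∀ t : ℝ, 0 < (1+|t|)^(-(3/2:ℝ)) := fun t => by positivity
  set C2 : ℝ := k.factorial * (4*C) * (1/d)^k * 2^((1/2:ℝ)) * 2^(3/2:ℝ) with hC2
  have hC2p : 0 < C2 := by positivity
  set C3 : ℝ := max C1 0 / (1+4)^(-(3/2:ℝ)) with hC3
  have hC3p : 0 ≤ C3 := by positivity
  refine ⟨C2 + C3, by positivity, fun s h1 h2 => ?_⟩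
  rcases le_or_gt |s.im| 4 with ht | ht
  · have := hC1 s ⟨⟨h1, h2⟩, abs_le.mp ht⟩
    have e : (1+4:ℝ)^(-(3/2:ℝ)) ≤ (1+|s.im|)^(-(3/2:ℝ)) :=
      Real.rpow_le_rpow_of_nonpos (by positivity) (by linarith) (by norm_num)
    calc _ ≤ max C1 0 := this.trans (le_max_left _ _)
      _ = C3 * (1+4)^(-(3/2:ℝ)) := by rw [hC3]; field_simp
      _ ≤ C3 * (1+|s.im|)^(-(3/2:ℝ)) := by gcongr
      _ ≤ _ := by have := hmin s.im; nlinarith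
  · have htp : 0 < |s.im| := by linarith
    set r := d * (2*|s.im|)^(-5*a) with hr
    have hr0 : 0 < r := by positivity
    have hr1 : r ≤ 1/4 := by
      have : (2*|s.im|)^(-5*a) ≤ 1 := Real.rpow_le_one_of_one_le_of_nonpos (by linarith) (by linarith)
      nlinarith
    have hball : ∀ z ∈ Metric.closedBall s r, z ∈ zU ∧ ‖zF z‖ ≤ 4 * C * |s.im|^(5*a-2) := by
      intro z hz
      rw [mem_closedBall_iff_norm] at hz
      obtain ⟨e1, e2, e3, e4⟩ := im_close hz
      have hzp : 0 < |z.im| := by linarith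
      have h5 : (2*|s.im|)^(-5*a) ≤ |z.im|^(-5*a) :=
        Real.rpow_le_rpow_of_nonpos hzp (by linarith) (by linarith)
      have h6 : r ≤ d * |z.im|^(-5*a) := by rw [hr]; gcongr
      obtain ⟨g1, g2⟩ := hF z (by linarith) (by linarith) (by linarith)
      refine ⟨g1, g2.trans ?_⟩
      rw [mul_comm 4 C, mul_assoc]
      gcongr
      have hneg : 5*a - 2 ≤ 0 := by
        have : (0:ℝ) ≤ k := Nat.cast_nonneg k
        nlinarith
      calc |z.im|^(5*a-2) ≤ (|s.im|/2)^(5*a-2) := Real.rpow_le_rpow_of_nonpos (by linarith) (by linarith) hneg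
        _ = |s.im|^(5*a-2) * 2^(2-5*a) := by
          rw [Real.div_rpow htp.le (by norm_num), div_eq_mul_inv, ← Real.rpow_neg (by norm_num)]; ring_nf
        _ ≤ |s.im|^(5*a-2) * 2^(2:ℝ) := by
          gcongr
          · norm_num
          · linarith
        _ = _ := by norm_num; ring
    have := Complex.norm_iteratedDeriv_le_of_forall_mem_sphere_norm_le k hr0 (f := zF) (c := s)
      (C := 4 * C * |s.im|^(5*a-2)) (DifferentiableOn.diffContOnCl (zF_diff.mono fun z hz => by
        rw [closure_ball _ hr0.ne'] at hz; exact (hball z hz).1)) (fun z hz => (hball z (Metric.sphere_subset_closedBall hz)).2)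
    refine this.trans ?_
    have e1 : (r^k)⁻¹ = (1/d)^k * (2^(5*a*k) * |s.im|^(5*a*k)) := by
      rw [hr, mul_pow, mul_inv, ← Real.mul_rpow (by norm_num) htp.le, ← Real.rpow_mul_natCast (by positivity),
        ← Real.rpow_neg (by positivity)]
      simp
    have e2 : (2:ℝ)^(5*a*k) ≤ 2^(1/2:ℝ) := Real.rpow_le_rpow_of_exponent_le (by norm_num) (by nlinarith)
    have e3 : |s.im|^(5*a-2) * |s.im|^(5*a*k) = |s.im|^(-(3/2:ℝ)) := by
      rw [← Real.rpow_add htp]; congr 1; linarith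
    have e4 : |s.im|^(-(3/2:ℝ)) ≤ 2^(3/2:ℝ) * (1+|s.im|)^(-(3/2:ℝ)) := by
      have : ((1+|s.im|)/2)^(-(3/2:ℝ)) = 2^(3/2:ℝ) * (1+|s.im|)^(-(3/2:ℝ)) := by
        rw [Real.div_rpow (by positivity) (by norm_num), Real.rpow_neg (by norm_num : (0:ℝ) ≤ 2)]; field_simp
      rw [← this]
      exact Real.rpow_le_rpow_of_nonpos (by positivity) (by linarith) (by norm_num)
    calc (k.factorial:ℝ) * (4 * C * |s.im|^(5*a-2)) / r^k
        = k.factorial * (4*C) * (1/d)^k * 2^(5*a*k) * (|s.im|^(5*a-2) * |s.im|^(5*a*k)) := by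
          rw [div_eq_mul_inv, e1]; ring
      _ ≤ k.factorial * (4*C) * (1/d)^k * 2^(1/2:ℝ) * (2^(3/2:ℝ) * (1+|s.im|)^(-(3/2:ℝ))) := by
          rw [e3]; gcongr
      _ = C2 * (1+|s.im|)^(-(3/2:ℝ)) := by rw [hC2]; ring
      _ ≤ _ := by have := hmin s.im; nlinarith

open ArithmeticFunction in
noncomputable def WW (x : ℝ) : ℝ := ∑' n : ℕ, vonMangoldt n * max (x - n) 0

lemma WW_eq {x : ℝ} {N : ℕ} (h : x ≤ N) : WW x = ∑ n ∈ Finset.range N, ArithmeticFunction.vonMangoldt n * max (x - n) 0 := by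
  refine tsum_eq_sum fun n hn => ?_
  have : N ≤ n := by simpa using hn
  have h2 : (N:ℝ) ≤ n := by exact_mod_cast this
  rw [max_eq_right (by linarith), mul_zero]

lemma WW_cont : Continuous WW := by
  rw [continuous_iff_continuousAt]
  intro x
  obtain ⟨N, hN⟩ := exists_nat_gt x
  have : WW =ᶠ[nhds x] fun x => ∑ n ∈ Finset.range N, ArithmeticFunction.vonMangoldt n * max (x - n) 0 := by
    filter_upwards [Iio_mem_nhds hN] with y hy using WW_eq (le_of_lt hy)
  refine ContinuousAt.congr ?_ this.symm
  fun_prop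

lemma WW_nonneg (x : ℝ) : 0 ≤ WW x := tsum_nonneg fun n => mul_nonneg ArithmeticFunction.vonMangoldt_nonneg (le_max_right _ _)

lemma WW_zero {x : ℝ} (hx : x ≤ 1) : WW x = 0 := by
  rw [WW_eq (N := 1) (by simpa using hx)]; simp

lemma WW_le {x : ℝ} (hx : 0 ≤ x) : WW x ≤ x * Chebyshev.psi x := by
  rw [Chebyshev.psi_eq_sum_Icc, WW_eq (N := ⌊x⌋₊+1) (by push_cast; exact (Nat.lt_floor_add_one x).le), Finset.mul_sum]
  rw [show Finset.range (⌊x⌋₊+1) = Finset.Icc 0 ⌊x⌋₊ by ext; simp]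
  refine Finset.sum_le_sum fun n _ => ?_
  rw [mul_comm]
  gcongr
  exact max_le (by linarith [(Nat.cast_nonneg n : (0:ℝ) ≤ n)]) hx

/-- the transform of a single term -/
lemma term_transform {n : ℕ} (hn : 1 ≤ n) {s : ℂ} (hs : 0 < s.re) :
    Integrable (fun y : ℝ => ((max (Real.exp y - n) 0 : ℝ) : ℂ) * Complex.exp (-(s+1)*y)) ∧
    ∫ y : ℝ, ((max (Real.exp y - n) 0 : ℝ) : ℂ) * Complex.exp (-(s+1)*y) = (n:ℂ)^(-s) / (s*(s+1)) := by
  have hn0 : (0:ℝ) < n := by exact_mod_cast hn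
  have hnc : (n:ℂ) ≠ 0 := by exact_mod_cast hn0.ne'
  set f : ℝ → ℂ := fun y => Complex.exp (-s*y) - n * Complex.exp (-(s+1)*y) with hf
  have heq : (fun y : ℝ => ((max (Real.exp y - n) 0 : ℝ) : ℂ) * Complex.exp (-(s+1)*y)) =
      Set.indicator (Set.Ioi (Real.log n)) f := by
    funext y
    by_cases hy : Real.log n < y
    · rw [Set.indicator_of_mem (Set.mem_Ioi.mpr hy)]
      have : (n:ℝ) ≤ Real.exp y := ((Real.log_lt_iff_lt_exp hn0).mp hy).le
      rw [max_eq_left (by linarith)]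
      simp only [hf]; push_cast
      rw [sub_mul, ← Complex.exp_add]; congr 2; ring
    · rw [Set.indicator_of_notMem (by simpa using hy)]
      have : Real.exp y ≤ n := by
        rw [not_lt] at hy
        exact (Real.le_log_iff_exp_le hn0).mp hy
      rw [max_eq_right (by linarith)]; simp
  have i1 : IntegrableOn (fun y : ℝ => Complex.exp (-s*y)) (Set.Ioi (Real.log n)) :=
    integrableOn_exp_mul_complex_Ioi (by simpa using hs) _
  have i2 : IntegrableOn (fun y : ℝ => Complex.exp (-(s+1)*y)) (Set.Ioi (Real.log n)) :=
    integrableOn_exp_mul_complex_Ioi (by simp; linarith) _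
  have hif : IntegrableOn f (Set.Ioi (Real.log n)) := i1.sub (i2.const_mul _)
  rw [heq]
  refine ⟨(integrable_indicator_iff measurableSet_Ioi).mpr hif, ?_⟩
  rw [integral_indicator measurableSet_Ioi]
  simp only [hf]
  rw [integral_sub i1 (i2.const_mul _), integral_const_mul, integral_exp_mul_complex_Ioi (by simpa using hs),
    integral_exp_mul_complex_Ioi (by simp; linarith)]
  have hs0 : s ≠ 0 := by rintro rfl; simp at hs
  have hs1 : s + 1 ≠ 0 := by intro h; have := congrArg Complex.re h; simp at this; linarith
  have e1 : Complex.exp (-s * (Real.log n:ℝ)) = (n:ℂ)^(-s) := by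
    rw [Complex.cpow_def_of_ne_zero hnc, Complex.ofReal_log hn0.le]; simp; ring_nf
  have e2 : Complex.exp (-(s+1) * (Real.log n:ℝ)) = (n:ℂ)^(-s) / n := by
    rw [show -(s+1) * ((Real.log n:ℝ):ℂ) = -s*(Real.log n:ℝ) - (Real.log n:ℝ) by ring, Complex.exp_sub, e1,
      ← Complex.ofReal_exp, Real.exp_log hn0]; simp
  rw [e1, e2]
  field_simp
  ring

lemma main_transform {s : ℂ} (hs : 1 < s.re) :
    Integrable (fun y : ℝ => (((max (Real.exp y - 1) 0)^2/2 : ℝ) : ℂ) * Complex.exp (-(s+1)*y)) ∧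
    ∫ y : ℝ, (((max (Real.exp y - 1) 0)^2/2 : ℝ) : ℂ) * Complex.exp (-(s+1)*y) = 1 / ((s-1)*(s*(s+1))) := by
  set f : ℝ → ℂ := fun y => (1/2) * Complex.exp (-(s-1)*y) - Complex.exp (-s*y) + (1/2) * Complex.exp (-(s+1)*y) with hf
  have heq : (fun y : ℝ => (((max (Real.exp y - 1) 0)^2/2 : ℝ) : ℂ) * Complex.exp (-(s+1)*y)) =
      Set.indicator (Set.Ioi 0) f := by
    funext y
    by_cases hy : 0 < y
    · rw [Set.indicator_of_mem (Set.mem_Ioi.mpr hy)]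
      have : 1 ≤ Real.exp y := Real.one_le_exp hy.le
      rw [max_eq_left (by linarith)]
      simp only [hf]; push_cast
      rw [show -(s-1)*(y:ℂ) = y + y + -(s+1)*y by ring, show -s*(y:ℂ) = y + -(s+1)*y by ring]
      simp only [Complex.exp_add]; ring
    · rw [Set.indicator_of_notMem (by simpa using hy)]
      have : Real.exp y ≤ 1 := Real.exp_le_one_iff.mpr (not_lt.mp hy)
      rw [max_eq_right (by linarith)]; simp
  have i0 : IntegrableOn (fun y : ℝ => Complex.exp (-(s-1)*y)) (Set.Ioi 0) :=
    integrableOn_exp_mul_complex_Ioi (by simp; linarith) _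
  have i1 : IntegrableOn (fun y : ℝ => Complex.exp (-s*y)) (Set.Ioi 0) :=
    integrableOn_exp_mul_complex_Ioi (by simp; linarith) _
  have i2 : IntegrableOn (fun y : ℝ => Complex.exp (-(s+1)*y)) (Set.Ioi 0) :=
    integrableOn_exp_mul_complex_Ioi (by simp; linarith) _
  have j1 : IntegrableOn (fun y : ℝ => (1/2) * Complex.exp (-(s-1)*y) - Complex.exp (-s*y)) (Set.Ioi 0) := (i0.const_mul (1/2)).sub i1
  have hif : IntegrableOn f (Set.Ioi 0) := j1.add (i2.const_mul _)
  rw [heq]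
  refine ⟨(integrable_indicator_iff measurableSet_Ioi).mpr hif, ?_⟩
  rw [integral_indicator measurableSet_Ioi]
  simp only [hf]
  rw [integral_add j1 (i2.const_mul _), integral_sub (i0.const_mul _) i1, integral_const_mul, integral_const_mul, integral_exp_mul_complex_Ioi (by simp; linarith),
    integral_exp_mul_complex_Ioi (by simp; linarith), integral_exp_mul_complex_Ioi (by simp; linarith)]
  have hs0 : s ≠ 0 := by rintro rfl; simp at hs; linarith
  have hs1 : s + 1 ≠ 0 := by intro h; have := congrArg Complex.re h; simp at this; linarith
  have hs2 : s - 1 ≠ 0 := by intro h; have := congrArg Complex.re h; simp at this; linarith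
  simp only [Complex.ofReal_zero, mul_zero, Complex.exp_zero, neg_div_neg_eq]
  field_simp
  ring

noncomputable def RR (x : ℝ) : ℝ := WW x - (max (x-1) 0)^2/2

lemma RR_cont : Continuous RR := by
  unfold RR
  have := WW_cont
  fun_prop

lemma WW_transform {s : ℂ} (hs : 1 < s.re) :
    ∫ y : ℝ, ((WW (Real.exp y) : ℝ) : ℂ) * Complex.exp (-(s+1)*y) =
      (-deriv riemannZeta s / riemannZeta s) / (s*(s+1)) := by
  have hs0 : 0 < s.re := by linarith
  set F : ℕ → ℝ → ℂ := fun n y => (ArithmeticFunction.vonMangoldt n : ℂ) * (((max (Real.exp y - n) 0 : ℝ) : ℂ) * Complex.exp (-(s+1)*y)) with hF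
  have hint : ∀ n, Integrable (F n) ∧ ∫ y, F n y = LSeries.term (fun n => (ArithmeticFunction.vonMangoldt n : ℂ)) s n / (s*(s+1)) := by
    intro n
    rcases Nat.eq_zero_or_pos n with rfl | hn
    · simp [hF]
    · obtain ⟨h1, h2⟩ := term_transform hn hs0
      refine ⟨h1.const_mul _, ?_⟩
      simp only [hF]
      rw [integral_const_mul, h2, LSeries.term_of_ne_zero (by omega), Complex.cpow_neg]
      ring
  have hnorm : ∀ n, ∫ y, ‖F n y‖ = ‖LSeries.term (fun n => (ArithmeticFunction.vonMangoldt n : ℂ)) s n‖ / (s.re*(s.re+1)) := by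
    intro n
    rcases Nat.eq_zero_or_pos n with rfl | hn
    · simp [hF]
    · obtain ⟨h1, h2⟩ := term_transform hn (s := (s.re:ℂ)) (by simpa using hs0)
      have e : ∀ y, ((‖F n y‖ : ℝ) : ℂ) = (ArithmeticFunction.vonMangoldt n : ℂ) * (((max (Real.exp y - n) 0 : ℝ) : ℂ) * Complex.exp (-((s.re:ℂ)+1)*y)) := by
        intro y
        simp only [hF, norm_mul, Complex.norm_real, Real.norm_eq_abs]
        rw [abs_of_nonneg ArithmeticFunction.vonMangoldt_nonneg, abs_of_nonneg (le_max_right _ _), Complex.norm_exp]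
        push_cast; simp
      have : ((∫ y, ‖F n y‖ : ℝ) : ℂ) = (‖LSeries.term (fun n => (ArithmeticFunction.vonMangoldt n : ℂ)) s n‖ / (s.re*(s.re+1)) : ℝ) := by
        rw [← integral_complex_ofReal]
        simp_rw [e]
        rw [integral_const_mul, h2, LSeries.term_of_ne_zero (by omega), norm_div, Complex.norm_natCast_cpow_of_pos hn,
          Complex.norm_real, Real.norm_eq_abs, abs_of_nonneg ArithmeticFunction.vonMangoldt_nonneg, Complex.cpow_neg]
        push_cast
        rw [Complex.ofReal_cpow (by positivity)]
        push_cast; ring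
      exact_mod_cast this
  have hsumm := ArithmeticFunction.LSeriesSummable_vonMangoldt hs
  have key := hasSum_integral_of_summable_integral_norm (F := F) (μ := volume) (fun n => (hint n).1) (by
    simp_rw [hnorm]; exact hsumm.norm.div_const _)
  have e1 : ∀ y : ℝ, ∑' n, F n y = ((WW (Real.exp y) : ℝ) : ℂ) * Complex.exp (-(s+1)*y) := by
    intro y
    simp only [hF, WW]
    rw [Complex.ofReal_tsum, ← tsum_mul_right]
    congr 1; funext n; push_cast; ring
  simp_rw [e1] at key
  rw [← key.tsum_eq]
  simp_rw [fun n => (hint n).2]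
  rw [tsum_div_const, ← ArithmeticFunction.LSeries_vonMangoldt_eq_deriv_riemannZeta_div hs]
  rfl

lemma WW_int {s : ℂ} (hs : 1 < s.re) :
    Integrable (fun y : ℝ => ((WW (Real.exp y) : ℝ) : ℂ) * Complex.exp (-(s+1)*y)) := by
  have heq : (fun y : ℝ => ((WW (Real.exp y) : ℝ) : ℂ) * Complex.exp (-(s+1)*y)) = 
    Set.indicator (Set.Ioi 0) (fun y : ℝ => ((WW (Real.exp y) : ℝ) : ℂ) * Complex.exp (-(s+1)*y)) := by
    funext y
    by_cases hy : 0 < y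
    · rw [Set.indicator_of_mem (Set.mem_Ioi.mpr hy)]
    · rw [Set.indicator_of_notMem (by simpa using hy), WW_zero (Real.exp_le_one_iff.mpr (not_lt.mp hy))]; simp
  rw [heq, integrable_indicator_iff measurableSet_Ioi]
  have hi : IntegrableOn (fun y : ℝ => Complex.exp (-(s-1)*y)) (Set.Ioi 0) :=
    integrableOn_exp_mul_complex_Ioi (by simp; linarith) _
  refine (hi.norm.const_mul (Real.log 4 + 4)).mono' ?_ ?_
  · refine Continuous.aestronglyMeasurable ?_
    have := WW_cont
    fun_prop
  · refine Eventually.of_forall fun y => ?_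
    rw [norm_mul, Complex.norm_real, Real.norm_eq_abs, abs_of_nonneg (WW_nonneg _)]
    have h1 := WW_le (Real.exp_pos y).le
    have h2 := Chebyshev.psi_le_const_mul_self (Real.exp_pos y).le
    have h3 : WW (Real.exp y) ≤ (Real.log 4 + 4) * (Real.exp y * Real.exp y) := by
      nlinarith [Real.exp_pos y]
    have e : ‖Complex.exp (-(s-1)*y)‖ = (Real.exp y * Real.exp y) * ‖Complex.exp (-(s+1)*y)‖ := by
      rw [Complex.norm_exp, Complex.norm_exp, ← Real.exp_add, ← Real.exp_add]; congr 1; simp; ring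
    rw [e, ← mul_assoc]
    gcongr

lemma RR_transform {s : ℂ} (hs : 1 < s.re) :
    Integrable (fun y : ℝ => ((RR (Real.exp y) : ℝ) : ℂ) * Complex.exp (-(s+1)*y)) ∧
    ∫ y : ℝ, ((RR (Real.exp y) : ℝ) : ℂ) * Complex.exp (-(s+1)*y) = zF s := by
  have h1 := WW_int hs
  obtain ⟨h2, h3⟩ := main_transform hs
  have e : (fun y : ℝ => ((RR (Real.exp y) : ℝ) : ℂ) * Complex.exp (-(s+1)*y)) = fun y : ℝ =>
    ((WW (Real.exp y) : ℝ) : ℂ) * Complex.exp (-(s+1)*y) - (((max (Real.exp y - 1) 0)^2/2 : ℝ) : ℂ) * Complex.exp (-(s+1)*y) := by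
    funext y; simp only [RR]; push_cast; ring
  rw [e]
  refine ⟨h1.sub h2, ?_⟩
  have hs2 : s ≠ 1 := by rintro rfl; simp at hs
  have hs3 : s - 1 ≠ 0 := sub_ne_zero.mpr hs2
  have hz := riemannZeta_ne_zero_of_one_le_re hs.le
  rw [integral_sub h1 h2, h3, WW_transform hs, zF, zQ_eq hs2 hz]
  have hs0 : s ≠ 0 := by rintro rfl; simp at hs; linarith
  have hs1 : s + 1 ≠ 0 := by intro h; have := congrArg Complex.re h; simp at this; linarith
  field_simp

section
open scoped FourierTransform

lemma zF_an (k : ℕ) : AnalyticOnNhd ℂ (iteratedDeriv k zF) zU := by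
  rw [iteratedDeriv_eq_iterate]; exact (zF_diff.analyticOnNhd zU_open).iterated_deriv k

lemma phi_hasDeriv {σ : ℝ} (hσ : 1 ≤ σ) (k : ℕ) (ξ : ℝ) :
    HasDerivAt (fun ξ : ℝ => iteratedDeriv k zF (σ + 2*π*Complex.I*ξ))
      ((2*π*Complex.I) * iteratedDeriv (k+1) zF (σ + 2*π*Complex.I*ξ)) ξ := by
  have hm : (σ + 2*π*Complex.I*ξ : ℂ) ∈ zU := mem_zU (by simpa using hσ)
  have h1 : HasDerivAt (iteratedDeriv k zF) (iteratedDeriv (k+1) zF (σ + 2*π*Complex.I*ξ)) (σ + 2*π*Complex.I*ξ : ℂ) := by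
    rw [iteratedDeriv_succ]
    exact ((zF_an k) _ hm).differentiableAt.hasDerivAt
  have h2 : HasDerivAt (fun ξ : ℝ => (σ + 2*π*Complex.I*ξ : ℂ)) (2*π*Complex.I) ξ := by
    have := ((Complex.ofRealCLM.hasDerivAt (x := ξ)).const_mul (2*π*Complex.I)).const_add (σ:ℂ)
    simpa using this
  have := HasDerivAt.scomp (h := fun ξ : ℝ => (σ + 2*π*Complex.I*ξ : ℂ)) ξ h1 h2
  simpa [smul_eq_mul, Function.comp_def] using this

lemma phi_iter {σ : ℝ} (hσ : 1 ≤ σ) (k : ℕ) :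
    iteratedDeriv k (fun ξ : ℝ => zF (σ + 2*π*Complex.I*ξ)) =
     fun ξ : ℝ => (2*π*Complex.I)^k * iteratedDeriv k zF (σ + 2*π*Complex.I*ξ) := by
  induction k with
  | zero => simp
  | succ k ih =>
    rw [iteratedDeriv_succ, ih]
    funext ξ
    rw [((phi_hasDeriv hσ k ξ).const_mul _).deriv]
    ring

lemma phi_contDiff {σ : ℝ} (hσ : 1 ≤ σ) : ContDiff ℝ (⊤ : ℕ∞) (fun ξ : ℝ => zF (σ + 2*π*Complex.I*ξ)) := by
  refine contDiff_of_differentiable_iteratedDeriv fun m _ => ?_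
  rw [phi_iter hσ]
  intro ξ
  exact ((phi_hasDeriv hσ m ξ).const_mul _).differentiableAt

noncomputable def JJ : ℝ := ∫ ξ : ℝ, (1 + ‖ξ‖) ^ (-(3/2:ℝ))

lemma phi_int (k : ℕ) : ∃ C > 0, ∀ σ : ℝ, 1 ≤ σ → σ ≤ 3/2 →
    Integrable (iteratedDeriv k (fun ξ : ℝ => zF (σ + 2*π*Complex.I*ξ))) ∧
    ∫ ξ : ℝ, ‖iteratedDeriv k (fun ξ : ℝ => zF (σ + 2*π*Complex.I*ξ)) ξ‖ ≤ C := by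
  obtain ⟨C, hC, hb⟩ := zF_deriv_bound k
  have hJ : Integrable (fun ξ : ℝ => (1 + ‖ξ‖) ^ (-(3/2:ℝ))) := integrable_one_add_norm (by norm_num)
  have hJ0 : 0 ≤ JJ := integral_nonneg fun ξ => by positivity
  refine ⟨(2*π)^k * C * JJ + 1, by positivity, fun σ h1 h2 => ?_⟩
  have hbd : ∀ ξ : ℝ, ‖iteratedDeriv k (fun ξ : ℝ => zF (σ + 2*π*Complex.I*ξ)) ξ‖ ≤ (2*π)^k * C * (1 + ‖ξ‖) ^ (-(3/2:ℝ)) := by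
    intro ξ
    rw [phi_iter h1]
    have := hb (σ + 2*π*Complex.I*ξ) (by simpa using h1) (by simpa using h2)
    rw [norm_mul, norm_pow, mul_assoc ((2*π)^k)]
    have e : ‖(2*π*Complex.I : ℂ)‖ = 2*π := by simp [abs_of_pos Real.pi_pos]
    rw [e]
    gcongr
    refine this.trans ?_
    gcongr C * ?_
    have e2 : (σ + 2*π*Complex.I*ξ : ℂ).im = 2*π*ξ := by simp
    rw [e2]
    refine Real.rpow_le_rpow_of_nonpos (by positivity) ?_ (by norm_num)
    rw [abs_mul, abs_of_pos (by positivity : 0 < 2*π), Real.norm_eq_abs]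
    nlinarith [abs_nonneg ξ, Real.pi_gt_three]
  have hi : Integrable (iteratedDeriv k (fun ξ : ℝ => zF (σ + 2*π*Complex.I*ξ))) := by
    refine (hJ.const_mul ((2*π)^k * C)).mono' ?_ (Eventually.of_forall hbd)
    exact ((phi_contDiff h1).continuous_iteratedDeriv k (by exact_mod_cast le_top)).aestronglyMeasurable
  refine ⟨hi, ?_⟩
  calc _ ≤ ∫ ξ : ℝ, (2*π)^k * C * (1 + ‖ξ‖) ^ (-(3/2:ℝ)) := integral_mono hi.norm (hJ.const_mul _) hbd
    _ = (2*π)^k * C * JJ := by rw [integral_const_mul, JJ]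
    _ ≤ _ := by linarith

lemma RR_bound_sigma (k : ℕ) : ∃ C > 0, ∀ σ : ℝ, 1 < σ → σ ≤ 3/2 → ∀ y : ℝ, 0 ≤ y → 
    y^k * (|RR (Real.exp y)| * Real.exp (-(σ+1)*y)) ≤ C := by
  obtain ⟨C, hC, hb⟩ := phi_int k
  refine ⟨C, hC, fun σ h1 h2 y hy => ?_⟩
  set φ : ℝ → ℂ := fun ξ : ℝ => zF (σ + 2*π*Complex.I*ξ) with hφ
  set f : ℝ → ℂ := fun y : ℝ => ((RR (Real.exp y) : ℝ) : ℂ) * Complex.exp (-((σ:ℂ)+1)*y) with hf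
  have hfi : Integrable f := (RR_transform (s := (σ:ℂ)) (by simpa using h1)).1
  have hfc : Continuous f := by
    have := RR_cont
    simp only [hf]; fun_prop
  have hF : 𝓕 f = φ := by
    funext ξ
    rw [Real.fourier_real_eq_integral_exp_smul]
    simp only [hφ]
    rw [← (RR_transform (s := (σ + 2*π*Complex.I*ξ)) (by simpa using h1)).2]
    congr 1; funext y
    simp only [hf, smul_eq_mul]
    rw [mul_left_comm, ← Complex.exp_add]
    congr 2
    push_cast; ring
  have hall : ∀ n : ℕ, Integrable (iteratedDeriv n φ) := fun n => by
    obtain ⟨C', _, hb'⟩ := phi_int n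
    exact (hb' σ h1.le h2).1
  have hinv : 𝓕⁻ φ = f := by
    rw [← hF]
    exact hfc.fourierInv_fourier_eq hfi (by rw [hF]; simpa using hall 0)
  have hk := Real.fourier_iteratedDeriv (f := φ) (N := ⊤) (n := k) (phi_contDiff h1.le) (fun n _ => hall n) le_top
  have h3 := congrFun hk (-y)
  have h4 : 𝓕 φ (-y) = f y := by
    rw [← hinv, Real.fourierInv_eq_fourier_neg]
  rw [h4] at h3
  have h5 : ‖𝓕 (iteratedDeriv k φ) (-y)‖ ≤ C :=
    (VectorFourier.norm_fourierIntegral_le_integral_norm _ _ _ _ _).trans (hb σ h1.le h2).2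
  rw [h3, norm_smul, norm_pow] at h5
  have e1 : ‖(2*π*Complex.I*((-y:ℝ):ℂ) : ℂ)‖ = 2*π*y := by
    simp [abs_of_pos Real.pi_pos, abs_of_nonneg hy]
  have e2 : ‖f y‖ = |RR (Real.exp y)| * Real.exp (-(σ+1)*y) := by
    simp only [hf, norm_mul, Complex.norm_exp]
    simp
  rw [e1, e2] at h5
  refine le_trans ?_ h5
  gcongr
  nlinarith [Real.pi_gt_three]

lemma RR_bound_exp (k : ℕ) : ∃ C > 0, ∀ y : ℝ, 0 ≤ y → 
    y^k * |RR (Real.exp y)| ≤ C * Real.exp (2*y) := by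
  obtain ⟨C, hC, hb⟩ := RR_bound_sigma k
  refine ⟨C, hC, fun y hy => ?_⟩
  have hc : Tendsto (fun σ : ℝ => y^k * (|RR (Real.exp y)| * Real.exp (-(σ+1)*y))) (nhdsWithin 1 (Set.Ioi 1))
     (nhds (y^k * (|RR (Real.exp y)| * Real.exp (-(1+1)*y)))) := by
    refine Tendsto.mono_left (Continuous.tendsto (by fun_prop) 1) nhdsWithin_le_nhds
  have h := le_of_tendsto hc (by
    filter_upwards [Ioo_mem_nhdsGT (show (1:ℝ) < 3/2 by norm_num)] with σ hσ
    exact hb σ hσ.1 hσ.2.le y hy)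
  rw [show Real.exp (-(1+1)*y) = (Real.exp (2*y))⁻¹ by rw [← Real.exp_neg]; congr 1; ring, ← mul_assoc, ← div_eq_mul_inv,
    div_le_iff₀ (Real.exp_pos _)] at h
  exact h

lemma RR_bound (k : ℕ) : ∃ C > 0, ∀ x : ℝ, 1 < x → |RR x| ≤ C * x^2 / (Real.log x)^k := by
  obtain ⟨C, hC, hb⟩ := RR_bound_exp k
  refine ⟨C, hC, fun x hx => ?_⟩
  have h := hb (Real.log x) (Real.log_nonneg hx.le)
  rw [two_mul, Real.exp_add, Real.exp_log (by linarith)] at h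
  rw [le_div_iff₀ (pow_pos (Real.log_pos hx) k)]
  nlinarith

end

lemma psi_eq_range {x : ℝ} {N : ℕ} (hx : 0 ≤ x) (h : x < N) :
    Chebyshev.psi x = ∑ n ∈ Finset.range N, ArithmeticFunction.vonMangoldt n * (if (n:ℝ) ≤ x then 1 else 0) := by
  rw [Chebyshev.psi_eq_sum_Icc]
  simp only [mul_ite, mul_one, mul_zero]
  rw [← Finset.sum_filter]
  congr 1
  ext n
  simp only [Finset.mem_Icc, Finset.mem_filter, Finset.mem_range, Nat.zero_le, true_and]
  rw [Nat.le_floor_iff hx]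
  constructor
  · intro h1
    exact ⟨by exact_mod_cast h1.trans_lt h, h1⟩
  · exact fun h => h.2

lemma WW_diff_lower {x h : ℝ} (hx : 0 ≤ x) (hh : 0 ≤ h) : h * Chebyshev.psi x ≤ WW (x+h) - WW x := by
  obtain ⟨N, hN⟩ := exists_nat_gt (x+h)
  rw [psi_eq_range hx (by linarith : x < N), WW_eq hN.le, WW_eq (by linarith : x ≤ N), ← Finset.sum_sub_distrib, Finset.mul_sum]
  refine Finset.sum_le_sum fun n _ => ?_
  rw [← mul_sub, mul_left_comm]
  refine mul_le_mul_of_nonneg_left ?_ ArithmeticFunction.vonMangoldt_nonneg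
  split_ifs with h1
  · rw [max_eq_left (by linarith), max_eq_left (by linarith)]; linarith
  · have := max_le_max (show x - n ≤ x + h - n by linarith) (le_refl (0:ℝ))
    linarith

lemma WW_diff_upper {x h : ℝ} (hx : 0 ≤ x) (hh : 0 ≤ h) : WW x - WW (x-h) ≤ h * Chebyshev.psi x := by
  obtain ⟨N, hN⟩ := exists_nat_gt (x)
  rw [psi_eq_range hx hN, WW_eq hN.le, WW_eq (by linarith : x - h ≤ N), ← Finset.sum_sub_distrib, Finset.mul_sum]
  refine Finset.sum_le_sum fun n _ => ?_
  rw [← mul_sub, mul_left_comm]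
  refine mul_le_mul_of_nonneg_left ?_ ArithmeticFunction.vonMangoldt_nonneg
  split_ifs with h1
  · rw [max_eq_left (by linarith)]; have := le_max_left (x-h-n) 0; linarith
  · rw [not_le] at h1
    rw [max_eq_right (by linarith), max_eq_right (by linarith)]; linarith

lemma log_pow_le (B : ℕ) {x : ℝ} (hx : 1 ≤ x) : (Real.log x)^B ≤ B.factorial * x := by
  have h := Real.pow_div_factorial_le_exp (Real.log x) (Real.log_nonneg hx) B
  rw [Real.exp_log (by linarith), div_le_iff₀ (by positivity)] at h
  linarith

lemma psi_bound_aux (B : ℕ) (hB : 1 ≤ B) : ∃ C > 0, ∀ x : ℝ, 2 ≤ Real.log x → 0 < x → |Chebyshev.psi x - x| ≤ C * x / (Real.log x)^B := by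
  obtain ⟨C, hC, hb⟩ := RR_bound (2*B)
  refine ⟨B.factorial + 1 + 5 * C + 2^(2*B)*C, by positivity, fun x hL hx => ?_⟩
  set L := Real.log x with hLdef
  have hx1 : 1 < x := by
    by_contra h; push Not at h
    have := Real.log_nonpos hx.le h; linarith
  have hx4 : 4 ≤ x := by
    have h1 : Real.exp L = x := Real.exp_log hx
    have h2 : (2:ℝ)^2/2 ≤ 2 := by norm_num
    have h3 := Real.add_one_le_exp (1:ℝ)
    have h4 : Real.exp 2 ≤ Real.exp L := Real.exp_le_exp.mpr hL
    have h5 : Real.exp 2 = Real.exp 1 * Real.exp 1 := by rw [← Real.exp_add]; norm_num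
    nlinarith
  have hLB : 2 ≤ L^B := by
    calc (2:ℝ) ≤ L := hL
      _ = L^1 := (pow_one _).symm
      _ ≤ L^B := pow_le_pow_right₀ (by linarith) hB
  have hLB0 : 0 < L^B := by linarith
  set h := x / L^B with hh
  have hhpos : 0 < h := by positivity
  have hhx : h ≤ x/2 := by
    rw [hh]; gcongr
  have hhL : h * L^B = x := by rw [hh]; field_simp
  have hRx : |RR x| ≤ C * h^2 := by
    have := hb x hx1
    rwa [pow_mul', mul_div_assoc, ← div_pow] at this
  have hRxh : |RR (x+h)| ≤ 4 * C * h^2 := by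
    have := hb (x+h) (by linarith)
    refine this.trans ?_
    have h1 : L ≤ Real.log (x+h) := Real.log_le_log hx (by linarith)
    calc C * (x+h)^2 / (Real.log (x+h))^(2*B) ≤ C * (2*x)^2 / L^(2*B) := by
          gcongr; linarith
      _ = 4 * C * h^2 := by rw [hh, pow_mul', div_pow]; ring
  have hRxm : |RR (x-h)| ≤ 2^(2*B) * C * h^2 := by
    have := hb (x-h) (by linarith)
    refine this.trans ?_
    have h1 : L/2 ≤ Real.log (x-h) := by
      have h2 : Real.log (x/2) ≤ Real.log (x-h) := Real.log_le_log (by linarith) (by linarith)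
      rw [Real.log_div (by linarith) (by norm_num)] at h2
      have := Real.log_two_lt_d9
      linarith
    calc C * (x-h)^2 / (Real.log (x-h))^(2*B) ≤ C * x^2 / (L/2)^(2*B) := by
          have : 0 ≤ x - h := by linarith
          gcongr; linarith
      _ = 2^(2*B) * C * h^2 := by
        rw [hh, div_pow, div_pow, ← pow_mul, mul_comm B 2]; field_simp
  have hone : 1 ≤ B.factorial * h := by
    have h1 := log_pow_le B hx1.le
    rw [← hLdef] at h1
    have : L^B * 1 ≤ L^B * (B.factorial * h) := by nlinarith
    exact le_of_mul_le_mul_left this hLB0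
  have hl := WW_diff_lower hx.le hhpos.le
  have hu := WW_diff_upper hx.le hhpos.le
  have w1 : WW x = RR x + (x-1)^2/2 := by rw [RR, max_eq_left (by linarith)]; ring
  have w2 : WW (x+h) = RR (x+h) + (x+h-1)^2/2 := by rw [RR, max_eq_left (by linarith)]; ring
  have w3 : WW (x-h) = RR (x-h) + (x-h-1)^2/2 := by rw [RR, max_eq_left (by linarith)]; ring
  rw [w1, w2] at hl
  rw [w1, w3] at hu
  have e : (B.factorial + 1 + 5 * C + 2^(2*B)*C) * x / L^B = (B.factorial + 1 + 5 * C + 2^(2*B)*C) * h := by rw [hh]; ring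
  rw [e]
  rw [abs_le] at *
  set D := (2:ℝ)^(2*B)*C with hD
  have hD0 : 0 < D := by positivity
  set F := (B.factorial : ℝ)
  have hF : 0 ≤ F := by positivity
  constructor
  · refine le_of_mul_le_mul_left ?_ hhpos
    nlinarith
  · refine le_of_mul_le_mul_left ?_ hhpos
    nlinarith

lemma psi_bound (A : ℕ) : ∃ C > 0, ∀ x : ℝ, 1 < x → |Chebyshev.psi x - x| ≤ C * x / (Real.log x)^A := by
  obtain ⟨C, hC, hb⟩ := psi_bound_aux (A+1) (by omega)
  refine ⟨C + 2^A * (Real.log 4 + 5), by positivity, fun x hx => ?_⟩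
  have hL0 := Real.log_pos hx
  rcases le_or_gt 2 (Real.log x) with hL | hL
  · refine (hb x hL (by linarith)).trans ?_
    have : (Real.log x)^A ≤ (Real.log x)^(A+1) := pow_le_pow_right₀ (by linarith) (by omega)
    have h4 : 0 < Real.log 4 := Real.log_pos (by norm_num)
    gcongr
    · have : 0 ≤ (2:ℝ)^A * (Real.log 4 + 5) := by positivity
      linarith
  · have h1 := Chebyshev.psi_le_const_mul_self (show 0 ≤ x by linarith)
    have h2 := Chebyshev.psi_nonneg x
    have h4 : 0 < Real.log 4 := Real.log_pos (by norm_num)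
    have h3 : |Chebyshev.psi x - x| ≤ (Real.log 4 + 5) * x := by
      rw [abs_le]; constructor <;> nlinarith
    refine h3.trans ?_
    rw [le_div_iff₀ (by positivity)]
    have h5 : (Real.log x)^A ≤ 2^A := pow_le_pow_left₀ hL0.le hL.le A
    have : (Real.log 4 + 5) * x * (Real.log x)^A ≤ (Real.log 4 + 5) * x * 2^A := by gcongr
    nlinarith

lemma theta_bound (A : ℕ) : ∃ C > 0, ∀ x : ℝ, 1 < x → |Chebyshev.theta x - x| ≤ C * x / (Real.log x)^A := by
  obtain ⟨C, hC, hb⟩ := psi_bound A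
  refine ⟨C + 2 * 2^(A+1) * (A+1).factorial, by positivity, fun x hx => ?_⟩
  have h1 := hb x hx
  have h2 := Chebyshev.psi_sub_theta_le hx.le
  have h3 := Chebyshev.theta_le_psi x
  have hL := Real.log_pos hx
  have h4 : 2 * √x * Real.log x ≤ 2 * 2^(A+1) * (A+1).factorial * x / (Real.log x)^A := by
    rw [le_div_iff₀ (by positivity)]
    have h5 := log_pow_le (A+1) (x := √x) (Real.one_le_sqrt.mpr hx.le)
    rw [Real.log_sqrt (by linarith), div_pow, div_le_iff₀ (by positivity)] at h5
    have h6 : √x * √x = x := Real.mul_self_sqrt (by linarith)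
    have : √x * Real.log x^(A+1) ≤ √x * ((A+1).factorial * √x * 2^(A+1)) := by gcongr
    calc _ = 2 * (√x * Real.log x^(A+1)) := by ring
      _ ≤ 2 * (√x * ((A+1).factorial * √x * 2^(A+1))) := by linarith
      _ = 2 * 2^(A+1) * (A+1).factorial * (√x * √x) := by ring
      _ = _ := by rw [h6]
  rw [add_mul, add_div]
  rw [abs_le] at *
  have : 2 * √x * Real.log x ≥ 0 := by positivity
  constructor <;> linarith

lemma abel_id {a b : ℝ} (ha : 0 ≤ a) (hab : a ≤ b) {f f' : ℝ → ℝ} (hf : ∀ t ∈ Set.Icc a b, HasDerivAt f (f' t) t)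
    (hc : ContinuousOn f' (Set.Icc a b)) :
    IntervalIntegrable (fun t => f' t * (Chebyshev.theta t - t)) volume a b ∧
    ∑ p ∈ Finset.Ioc ⌊a⌋₊ ⌊b⌋₊ with p.Prime, f p * Real.log p =
      (∫ t in a..b, f t) + f b * (Chebyshev.theta b - b) - f a * (Chebyshev.theta a - a)
        - ∫ t in a..b, f' t * (Chebyshev.theta t - t) := by
  set c : ℕ → ℝ := fun n => if n.Prime then Real.log n else 0 with hcdef
  have hth : ∀ t, Chebyshev.theta t = ∑ k ∈ Finset.Icc 0 ⌊t⌋₊, c k := by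
    intro t; rw [Chebyshev.theta_eq_sum_Icc, Finset.sum_filter]
  have hder : Set.EqOn (deriv f) f' (Set.Icc a b) := fun t ht => (hf t ht).deriv
  have hi' : IntegrableOn f' (Set.Icc a b) := hc.integrableOn_Icc
  have hi : IntegrableOn (deriv f) (Set.Icc a b) := hi'.congr_fun hder.symm measurableSet_Icc
  have h1 := sum_mul_eq_sub_sub_integral_mul c ha hab (fun t ht => (hf t ht).differentiableAt) hi
  have hI1 : IntervalIntegrable (fun t => f' t * Chebyshev.theta t) volume a b := by
    rw [intervalIntegrable_iff_integrableOn_Icc_of_le hab]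
    simp_rw [hth]
    exact integrableOn_mul_sum_Icc c ha hi'
  have hI2 : IntervalIntegrable (fun t => f' t * t) volume a b := by
    apply ContinuousOn.intervalIntegrable
    rw [Set.uIcc_of_le hab]
    fun_prop
  have hI : IntervalIntegrable (fun t => f' t * (Chebyshev.theta t - t)) volume a b := by
    simp_rw [mul_sub]; exact hI1.sub hI2
  refine ⟨hI, ?_⟩
  have h2 : ∫ t in a..b, f t * 1 = f b * b - f a * a - ∫ t in a..b, f' t * t := by
    refine intervalIntegral.integral_mul_deriv_eq_deriv_mul (u := f) (v := fun t => t) (u' := f') (v' := fun _ => 1) ?_ ?_ ?_ ?_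
    · intro x hx; rw [Set.uIcc_of_le hab] at hx; exact hf x hx
    · intro x hx; exact hasDerivAt_id x
    · apply ContinuousOn.intervalIntegrable; rwa [Set.uIcc_of_le hab]
    · simp
  simp only [mul_one] at h2
  have h3 : ∫ t in Set.Ioc a b, deriv f t * ∑ k ∈ Finset.Icc 0 ⌊t⌋₊, c k = ∫ t in a..b, f' t * Chebyshev.theta t := by
    rw [intervalIntegral.integral_of_le hab]
    refine setIntegral_congr_fun measurableSet_Ioc fun t ht => ?_
    rw [hder (Set.Ioc_subset_Icc_self ht), hth]
  rw [h3, ← hth, ← hth] at h1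
  have h4 : ∑ p ∈ Finset.Ioc ⌊a⌋₊ ⌊b⌋₊ with p.Prime, f p * Real.log p = ∑ k ∈ Finset.Ioc ⌊a⌋₊ ⌊b⌋₊, f k * c k := by
    rw [Finset.sum_filter]; refine Finset.sum_congr rfl fun k _ => ?_
    simp only [hcdef]; split_ifs <;> simp
  rw [h4, h1]
  simp_rw [mul_sub]
  rw [intervalIntegral.integral_sub hI1 hI2, h2]
  ring

lemma abel_bound {a b : ℝ} (ha : 0 ≤ a) (hab : a ≤ b) {f f' G : ℝ → ℝ} (hf : ∀ t ∈ Set.Icc a b, HasDerivAt f (f' t) t)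
    (hc : ContinuousOn f' (Set.Icc a b)) (hG : ContinuousOn G (Set.Icc a b)) (hf0 : ∀ t ∈ Set.Icc a b, 0 ≤ f t)
    (hf1 : ∀ t ∈ Set.Icc a b, f' t ≤ 0) (hr : ∀ t ∈ Set.Icc a b, |Chebyshev.theta t - t| ≤ G t) :
    |∑ p ∈ Finset.Ioc ⌊a⌋₊ ⌊b⌋₊ with p.Prime, f p * Real.log p - ∫ t in a..b, f t| ≤
      f b * G b + f a * G a + ∫ t in a..b, (-f' t) * G t := by
  obtain ⟨hI, h⟩ := abel_id ha hab hf hc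
  rw [h]
  have ha' : a ∈ Set.Icc a b := ⟨le_refl _, hab⟩
  have hb' : b ∈ Set.Icc a b := ⟨hab, le_refl _⟩
  have h1 : |f b * (Chebyshev.theta b - b)| ≤ f b * G b := by
    rw [abs_mul, abs_of_nonneg (hf0 b hb')]; exact mul_le_mul_of_nonneg_left (hr b hb') (hf0 b hb')
  have h2 : |f a * (Chebyshev.theta a - a)| ≤ f a * G a := by
    rw [abs_mul, abs_of_nonneg (hf0 a ha')]; exact mul_le_mul_of_nonneg_left (hr a ha') (hf0 a ha')
  have h3 : |∫ t in a..b, f' t * (Chebyshev.theta t - t)| ≤ ∫ t in a..b, (-f' t) * G t := by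
    refine (intervalIntegral.abs_integral_le_integral_abs hab).trans ?_
    refine intervalIntegral.integral_mono_on hab hI.abs ?_ ?_
    · apply ContinuousOn.intervalIntegrable; rw [Set.uIcc_of_le hab]; fun_prop
    · intro t ht
      rw [abs_mul, abs_of_nonpos (hf1 t ht)]
      exact mul_le_mul_of_nonneg_left (hr t ht) (by linarith [hf1 t ht])
  rw [abs_le] at *
  constructor <;> linarith

lemma hasDeriv_inv_log {t : ℝ} (ht : 1 < t) : HasDerivAt (fun t => (Real.log t)⁻¹) (-(t * (Real.log t)^2)⁻¹) t := by
  have hL := Real.log_pos ht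
  have := (Real.hasDerivAt_log (by linarith : t ≠ 0)).fun_inv hL.ne'
  refine this.congr_deriv ?_
  field_simp

lemma prime_count_bound {a b E : ℝ} (ha : 1 < a) (hab : a ≤ b) (hr : ∀ t ∈ Set.Icc a b, |Chebyshev.theta t - t| ≤ E) :
    |(((Finset.Ioc ⌊a⌋₊ ⌊b⌋₊).filter Nat.Prime).card : ℝ) - ∫ t in a..b, (Real.log t)⁻¹| ≤ 2 * (Real.log a)⁻¹ * E := by
  have hgt : ∀ t ∈ Set.Icc a b, 1 < t := fun t ht => ha.trans_le ht.1
  have hl : ∀ t ∈ Set.Icc a b, 0 < Real.log t := fun t ht => Real.log_pos (hgt t ht)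
  have hcont : ContinuousOn (fun t : ℝ => -(t * (Real.log t)^2)⁻¹) (Set.Icc a b) := by
    intro t ht
    have h1 := hgt t ht
    have h2 := hl t ht
    have : t ≠ 0 := by linarith
    have : t * Real.log t ^2 ≠ 0 := by positivity
    apply ContinuousAt.continuousWithinAt
    fun_prop (disch := assumption)
  have h := abel_bound (a := a) (b := b) (f := fun t => (Real.log t)⁻¹) (f' := fun t => -(t * (Real.log t)^2)⁻¹) (G := fun _ => E)
    (by linarith) hab (fun t ht => hasDeriv_inv_log (hgt t ht)) hcont continuousOn_const
    (fun t ht => (inv_pos.mpr (hl t ht)).le) (fun t ht => by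
      have h1 := hgt t ht
      have h2 := hl t ht
      simp only [Left.neg_nonpos_iff]; positivity) hr
  have e : ∑ p ∈ Finset.Ioc ⌊a⌋₊ ⌊b⌋₊ with p.Prime, (Real.log p)⁻¹ * Real.log p = (((Finset.Ioc ⌊a⌋₊ ⌊b⌋₊).filter Nat.Prime).card : ℝ) := by
    rw [Finset.card_eq_sum_ones]; push_cast
    refine Finset.sum_congr rfl fun p hp => ?_
    have : 1 < p := ((Finset.mem_filter.mp hp).2).one_lt
    have : (1:ℝ) < p := by exact_mod_cast this
    exact inv_mul_cancel₀ (Real.log_pos this).ne'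
  rw [e] at h
  refine h.trans (le_of_eq ?_)
  have hint : ∫ t in a..b, (- -(t * (Real.log t)^2)⁻¹) = -(Real.log b)⁻¹ - -(Real.log a)⁻¹ := by
    refine intervalIntegral.integral_eq_sub_of_hasDerivAt (f := fun t => -(Real.log t)⁻¹) (f' := fun t => - -(t * (Real.log t)^2)⁻¹) ?_ ?_
    · intro t ht; rw [Set.uIcc_of_le hab] at ht; exact (hasDeriv_inv_log (hgt t ht)).neg
    · apply ContinuousOn.intervalIntegrable; rw [Set.uIcc_of_le hab]; exact hcont.neg
  rw [intervalIntegral.integral_mul_const, hint]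
  ring

noncomputable def PA (x : ℝ) : ℝ := ∑ p ∈ Finset.Ioc 0 ⌊x⌋₊ with p.Prime, 1 / (p:ℝ)

lemma hasDeriv_inv_tlog {t : ℝ} (ht : 1 < t) : HasDerivAt (fun t => (t * Real.log t)⁻¹) (-((Real.log t + 1) / (t * Real.log t)^2)) t := by
  have hL := Real.log_pos ht
  have := ((hasDerivAt_id t).mul (Real.hasDerivAt_log (by linarith : t ≠ 0))).fun_inv (by simp; constructor <;> [linarith; (constructor <;> linarith)])
  refine this.congr_deriv ?_
  simp
  rw [mul_inv_cancel₀ (by linarith)]; ring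

lemma hasDeriv_loglog {t : ℝ} (ht : 1 < t) : HasDerivAt (fun t => Real.log (Real.log t)) ((t * Real.log t)⁻¹) t := by
  have hL := Real.log_pos ht
  have := (Real.hasDerivAt_log (by linarith : t ≠ 0)).log hL.ne'
  refine this.congr_deriv ?_
  field_simp

lemma hasDeriv_log_pow {t : ℝ} (ht : 1 < t) (A : ℕ) : HasDerivAt (fun t => -(A+1:ℝ)⁻¹ * ((Real.log t)^(A+1))⁻¹) (t⁻¹ * ((Real.log t)^(A+2))⁻¹) t := by
  have hL := Real.log_pos ht
  have := (((Real.hasDerivAt_log (by linarith : t ≠ 0)).fun_pow (A+1)).fun_inv (pow_pos hL (A+1)).ne').const_mul (-(A+1:ℝ)⁻¹)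
  refine this.congr_deriv ?_
  push_cast
  have : (A+1:ℝ) ≠ 0 := by positivity
  field_simp
  ring

lemma PA_diff {a b : ℝ} (h : a ≤ b) : PA b - PA a = ∑ p ∈ Finset.Ioc ⌊a⌋₊ ⌊b⌋₊ with p.Prime, 1 / (p:ℝ) := by
  have h1 : ⌊a⌋₊ ≤ ⌊b⌋₊ := Nat.floor_le_floor h
  simp only [PA, Finset.sum_filter]
  rw [sub_eq_iff_eq_add', Finset.sum_Ioc_consecutive _ (Nat.zero_le _) h1]

lemma PA_cauchy (A : ℕ) : ∃ C > 0, ∀ a b : ℝ, 3 ≤ a → a ≤ b →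
    |PA b - PA a - (Real.log (Real.log b) - Real.log (Real.log a))| ≤ C / (Real.log a)^(A+1) := by
  obtain ⟨C, hC, hb⟩ := theta_bound (A+1)
  refine ⟨4*C, by positivity, fun a b ha hab => ?_⟩
  have hgt : ∀ t ∈ Set.Icc a b, 1 < t := fun t ht => by linarith [ht.1]
  have h3 : 1 ≤ Real.log a := by
    rw [Real.le_log_iff_exp_le (by linarith)]
    linarith [Real.exp_one_lt_d9]
  have hla : ∀ t ∈ Set.Icc a b, Real.log a ≤ Real.log t := fun t ht => Real.log_le_log (by linarith) ht.1
  have hl : ∀ t ∈ Set.Icc a b, 1 ≤ Real.log t := fun t ht => h3.trans (hla t ht)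
  have hcG : ContinuousOn (fun t : ℝ => C * t / (Real.log t)^(A+1)) (Set.Icc a b) := by
    intro t ht
    have h1 := hgt t ht
    have h2 := hl t ht
    have : t ≠ 0 := by linarith
    have : Real.log t ^(A+1) ≠ 0 := by positivity
    apply ContinuousAt.continuousWithinAt
    fun_prop (disch := assumption)
  have hcf : ContinuousOn (fun t : ℝ => -((Real.log t + 1) / (t * Real.log t)^2)) (Set.Icc a b) := by
    intro t ht
    have h1 := hgt t ht
    have h2 := hl t ht
    have : t ≠ 0 := by linarith
    have : (t * Real.log t)^2 ≠ 0 := by positivity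
    apply ContinuousAt.continuousWithinAt
    fun_prop (disch := assumption)
  have h := abel_bound (a := a) (b := b) (f := fun t => (t * Real.log t)⁻¹) (f' := fun t => -((Real.log t + 1) / (t * Real.log t)^2))
    (G := fun t => C * t / (Real.log t)^(A+1)) (by linarith) hab (fun t ht => hasDeriv_inv_tlog (hgt t ht)) hcf hcG
    (fun t ht => by
      have h1 := hgt t ht
      have h2 := hl t ht
      positivity) (fun t ht => by
      have h1 := hgt t ht
      have h2 := hl t ht
      simp only [Left.neg_nonpos_iff]; positivity) (fun t ht => hb t (hgt t ht))
  have e : ∑ p ∈ Finset.Ioc ⌊a⌋₊ ⌊b⌋₊ with p.Prime, ((p:ℝ) * Real.log p)⁻¹ * Real.log p = PA b - PA a := by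
    rw [PA_diff hab]
    refine Finset.sum_congr rfl fun p hp => ?_
    have : 1 < p := ((Finset.mem_filter.mp hp).2).one_lt
    have : (1:ℝ) < p := by exact_mod_cast this
    have := Real.log_pos this
    field_simp
  have e2 : ∫ t in a..b, (t * Real.log t)⁻¹ = Real.log (Real.log b) - Real.log (Real.log a) := by
    refine intervalIntegral.integral_eq_sub_of_hasDerivAt (f := fun t => Real.log (Real.log t)) ?_ ?_
    · intro t ht; rw [Set.uIcc_of_le hab] at ht; exact hasDeriv_loglog (hgt t ht)
    · apply ContinuousOn.intervalIntegrable; rw [Set.uIcc_of_le hab]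
      intro t ht
      exact (hasDeriv_inv_tlog (hgt t ht)).continuousAt.continuousWithinAt
  rw [e, e2] at h
  refine h.trans ?_
  have hB : ∀ t ∈ Set.Icc a b, (t * Real.log t)⁻¹ * (C * t / (Real.log t)^(A+1)) ≤ C / (Real.log a)^(A+1) := by
    intro t ht
    have h1 := hgt t ht
    have h2 := hl t ht
    have : (t * Real.log t)⁻¹ * (C * t / (Real.log t)^(A+1)) = C / (Real.log t)^(A+2) := by field_simp; ring
    rw [this]
    have h5 := hla t ht
    have h6 : (Real.log a)^(A+1) ≤ (Real.log t)^(A+2) :=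
      (pow_le_pow_left₀ (by linarith) h5 (A+1)).trans (pow_le_pow_right₀ h2 (by omega))
    exact div_le_div_of_nonneg_left hC.le (pow_pos (by linarith) _) h6
  have hI : ∫ t in a..b, (- -((Real.log t + 1) / (t * Real.log t)^2)) * (C * t / (Real.log t)^(A+1)) ≤ 2 * C / (Real.log a)^(A+1) := by
    have hcp : ContinuousOn (fun t : ℝ => t⁻¹ * ((Real.log t)^(A+2))⁻¹) (Set.Icc a b) := by
      intro t ht
      have h1 := hgt t ht
      have h2 := hl t ht
      have : t ≠ 0 := by linarith
      have : Real.log t ^(A+2) ≠ 0 := by positivity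
      apply ContinuousAt.continuousWithinAt
      fun_prop (disch := assumption)
    have hpi : ∫ t in a..b, t⁻¹ * ((Real.log t)^(A+2))⁻¹ = -(A+1:ℝ)⁻¹ * ((Real.log b)^(A+1))⁻¹ - -(A+1:ℝ)⁻¹ * ((Real.log a)^(A+1))⁻¹ := by
      refine intervalIntegral.integral_eq_sub_of_hasDerivAt (f := fun t => -(A+1:ℝ)⁻¹ * ((Real.log t)^(A+1))⁻¹) ?_ ?_
      · intro t ht; rw [Set.uIcc_of_le hab] at ht; exact hasDeriv_log_pow (hgt t ht) A
      · apply ContinuousOn.intervalIntegrable; rw [Set.uIcc_of_le hab]; exact hcp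
    have hA1 : 0 < (A+1:ℝ)⁻¹ := by positivity
    have hA2 : (A+1:ℝ)⁻¹ ≤ 1 := inv_le_one_of_one_le₀ (by linarith [(Nat.cast_nonneg A : (0:ℝ) ≤ A)])
    have hLb : 0 < ((Real.log b)^(A+1))⁻¹ := inv_pos.mpr (pow_pos (by linarith [hl b ⟨hab, le_refl _⟩]) _)
    have hLa : 0 < ((Real.log a)^(A+1))⁻¹ := inv_pos.mpr (pow_pos (by linarith) _)
    calc _ ≤ ∫ t in a..b, (2 * C) * (t⁻¹ * ((Real.log t)^(A+2))⁻¹) := by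
          refine intervalIntegral.integral_mono_on hab ?_ ?_ ?_
          · apply ContinuousOn.intervalIntegrable; rw [Set.uIcc_of_le hab]; exact hcf.neg.mul hcG
          · apply ContinuousOn.intervalIntegrable; rw [Set.uIcc_of_le hab]; exact continuousOn_const.mul hcp
          · intro t ht
            have h1 := hgt t ht
            have h2 := hl t ht
            have h0 : 0 < Real.log t := by linarith
            have e5 : (2 * C) * (t⁻¹ * ((Real.log t)^(A+2))⁻¹) = (2 * Real.log t) / (t * Real.log t)^2 * (C * t / (Real.log t)^(A+1)) := by
              field_simp; ring
            rw [e5, neg_neg]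
            gcongr
            linarith
      _ ≤ _ := by
        rw [intervalIntegral.integral_const_mul, hpi, div_eq_mul_inv]
        refine mul_le_mul_of_nonneg_left ?_ (by positivity)
        nlinarith
  have hA := hB a ⟨le_refl _, hab⟩
  have hb' := hB b ⟨hab, le_refl _⟩
  have : 4 * C / (Real.log a)^(A+1) = C / (Real.log a)^(A+1) + C / (Real.log a)^(A+1) + 2 * C / (Real.log a)^(A+1) := by ring
  linarith

lemma PA_asymp : ∃ c : ℝ, ∀ A : ℕ, ∃ C > 0, ∀ x : ℝ, 3 ≤ x →
    |PA x - Real.log (Real.log x) - c| ≤ C / (Real.log x)^(A+1) := by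
  set g : ℝ → ℝ := fun x => PA x - Real.log (Real.log x) with hg
  have hlog : ∀ x : ℝ, 3 ≤ x → 1 ≤ Real.log x := fun x hx => by
    rw [Real.le_log_iff_exp_le (by linarith)]
    linarith [Real.exp_one_lt_d9]
  have hcau : CauchySeq (fun x => g (max x 3)) := by
    obtain ⟨C, hC, hb⟩ := PA_cauchy 0
    refine cauchySeq_of_le_tendsto_0' (fun x => C / (Real.log (max x 3))^(0+1)) ?_ ?_
    · intro n m hnm
      have := hb (max n 3) (max m 3) (le_max_right _ _) (max_le_max hnm (le_refl _))
      rw [Real.dist_eq, abs_sub_comm]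
      simp only [hg]
      convert this using 2
      ring
    · simp only [zero_add, pow_one]
      refine Tendsto.const_div_atTop ?_ _
      exact Real.tendsto_log_atTop.comp (tendsto_atTop_mono (fun x => le_max_left x 3) tendsto_id)
  obtain ⟨c, hc⟩ := cauchySeq_tendsto_of_complete hcau
  refine ⟨c, fun A => ?_⟩
  obtain ⟨C, hC, hb⟩ := PA_cauchy A
  refine ⟨C, hC, fun x hx => ?_⟩
  have ht : Tendsto (fun b => |g x - g (max b 3)|) atTop (nhds |g x - c|) := (tendsto_const_nhds.sub hc).abs
  refine le_of_tendsto ht ?_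
  filter_upwards [eventually_ge_atTop x] with b hxb
  rw [max_eq_left (by linarith), abs_sub_comm]
  have := hb x b hx hxb
  rw [show g b - g x = PA b - PA x - (Real.log (Real.log b) - Real.log (Real.log x)) by simp only [hg]; ring]
  exact this

lemma log_gamma_int : IntegrableOn (fun u : ℝ => Real.log u * Real.exp (-u)) (Set.Ioi 0) ∧
    ∫ u in Set.Ioi (0:ℝ), Real.log u * Real.exp (-u) = -Real.eulerMascheroniConstant := by
  have hO : (fun x : ℝ => (Real.exp (-x) : ℂ)) =O[atTop] (fun x : ℝ => x ^ (-(2:ℝ))) := by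
    have h := (isLittleO_exp_neg_mul_rpow_atTop (a := 1) one_pos (-(2:ℝ))).isBigO
    refine (Asymptotics.IsBigO.of_norm_left ?_)
    refine h.congr_left fun x => ?_
    rw [Complex.norm_real, Real.norm_eq_abs, abs_of_pos (Real.exp_pos _)]; simp
  have hO2 : (fun x : ℝ => (Real.exp (-x) : ℂ)) =O[nhdsWithin 0 (Set.Ioi 0)] (fun x : ℝ => x ^ (-(0:ℝ))) := by
    simp only [neg_zero, Real.rpow_zero]
    have : ContinuousAt (fun x : ℝ => (Real.exp (-x) : ℂ)) 0 := by fun_prop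
    exact (this.tendsto.mono_left nhdsWithin_le_nhds).isBigO_one ℝ
  have h := mellin_hasDerivAt_of_isBigO_rpow (f := fun x : ℝ => (Real.exp (-x) : ℂ)) (s := 1) (a := 2) (b := 0)
    ((by fun_prop : Continuous fun x : ℝ => (Real.exp (-x) : ℂ)).locallyIntegrable.locallyIntegrableOn _) hO (by norm_num) hO2 (by norm_num)
  obtain ⟨h1, h2⟩ := h
  have e : ∀ t : ℝ, (t:ℂ)^((1:ℂ)-1) • (Real.log t • (Real.exp (-t):ℂ)) = ((Real.log t * Real.exp (-t) : ℝ):ℂ) := by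
    intro t; simp
  constructor
  · rw [MellinConvergent] at h1
    simp_rw [e] at h1
    exact h1.re
  · have h3 : HasDerivAt (mellin (fun x : ℝ => (Real.exp (-x) : ℂ))) (-(Real.eulerMascheroniConstant:ℂ)) 1 := by
      refine Complex.hasDerivAt_Gamma_one.congr_of_eventuallyEq ?_
      have : ∀ᶠ s : ℂ in nhds 1, 0 < s.re := by
        exact (Complex.continuous_re.tendsto 1).eventually (lt_mem_nhds (by simp))
      filter_upwards [this] with s hs
      rw [← Complex.GammaIntegral_eq_mellin, Complex.Gamma_eq_integral hs]
    have h4 := h2.unique h3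
    rw [mellin] at h4
    simp_rw [e] at h4
    rw [integral_complex_ofReal] at h4
    exact_mod_cast h4

lemma log_delta_int {δ : ℝ} (hδ : 0 < δ) : IntegrableOn (fun v : ℝ => Real.log v * (δ * Real.exp (-(δ*v)))) (Set.Ioi 0) ∧
    ∫ v in Set.Ioi (0:ℝ), Real.log v * (δ * Real.exp (-(δ*v))) = -Real.eulerMascheroniConstant - Real.log δ := by
  obtain ⟨h1, h2⟩ := log_gamma_int
  have hexp : IntegrableOn (fun u : ℝ => Real.exp (-u)) (Set.Ioi 0) := integrableOn_exp_neg_Ioi 0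
  set g : ℝ → ℝ := fun u => δ * (Real.log u * Real.exp (-u) - Real.log δ * Real.exp (-u)) with hg
  have hgi : IntegrableOn g (Set.Ioi 0) := (h1.sub (hexp.const_mul _)).const_mul _
  have heq : Set.EqOn (fun v : ℝ => Real.log v * (δ * Real.exp (-(δ*v)))) (fun v => g (δ * v)) (Set.Ioi 0) := by
    intro v hv
    simp only [hg]
    rw [Real.log_mul hδ.ne' (ne_of_gt hv)]; ring
  constructor
  · rw [integrableOn_congr_fun heq measurableSet_Ioi]
    have := (integrableOn_Ioi_comp_mul_left_iff g 0 hδ).mpr (by simpa using hgi)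
    exact this
  · rw [setIntegral_congr_fun measurableSet_Ioi heq, integral_comp_mul_left_Ioi g 0 hδ]
    simp only [mul_zero, hg, smul_eq_mul]
    rw [integral_const_mul, integral_sub h1 (hexp.const_mul _), integral_const_mul, h2, integral_exp_neg_Ioi]
    field_simp
    simp

lemma PA_mono : Monotone PA := by
  intro a b h
  have := PA_diff h
  have h2 : 0 ≤ ∑ p ∈ Finset.Ioc ⌊a⌋₊ ⌊b⌋₊ with p.Prime, 1 / (p:ℝ) := Finset.sum_nonneg fun p _ => by positivity
  linarith

lemma PA_nonneg (x : ℝ) : 0 ≤ PA x := Finset.sum_nonneg fun p _ => by positivity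

lemma PA_zero {x : ℝ} (hx : x < 2) : PA x = 0 := by
  refine Finset.sum_eq_zero fun p hp => ?_
  simp only [Finset.mem_filter, Finset.mem_Ioc] at hp
  have h1 := hp.2.two_le
  have h2 : 2 ≤ ⌊x⌋₊ := h1.trans hp.1.2
  rw [Nat.le_floor_iff' (by norm_num)] at h2
  norm_num at h2; linarith

noncomputable def PS (δ : ℝ) : ℝ := ∑' n : ℕ, if n.Prime then (n:ℝ)^(-(1+δ)) else 0

lemma PS_integral {δ : ℝ} (hδ : 0 < δ) :
    PS δ = ∫ v in Set.Ioi (0:ℝ), PA (Real.exp v) * (δ * Real.exp (-(δ*v))) := by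
  set F : ℕ → ℝ → ℝ := fun n v => if n.Prime then (1/(n:ℝ)) * Set.indicator (Set.Ici (Real.log n)) (fun v => δ * Real.exp (-(δ*v))) v else 0 with hF
  have hexpint : ∀ a : ℝ, IntegrableOn (fun v : ℝ => δ * Real.exp (-(δ*v))) (Set.Ici a) ∧ 
      ∫ v in Set.Ici a, δ * Real.exp (-(δ*v)) = Real.exp (-(δ*a)) := by
    intro a
    rw [integrableOn_Ici_iff_integrableOn_Ioi, integral_Ici_eq_integral_Ioi, integral_const_mul]
    simp_rw [← neg_mul]
    refine ⟨(integrableOn_exp_mul_Ioi (by linarith) _).const_mul _, ?_⟩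
    rw [integral_exp_mul_Ioi (by linarith)]
    field_simp
  have hint : ∀ n, Integrable (F n) ∧ ∫ v, F n v = if n.Prime then (n:ℝ)^(-(1+δ)) else 0 := by
    intro n
    by_cases hn : n.Prime
    · have hn0 : (0:ℝ) < n := by exact_mod_cast hn.pos
      simp only [hF, if_pos hn]
      refine ⟨((integrable_indicator_iff measurableSet_Ici).mpr (hexpint _).1).const_mul _, ?_⟩
      rw [integral_const_mul, integral_indicator measurableSet_Ici, (hexpint _).2,
        Real.rpow_neg hn0.le, Real.rpow_add hn0, Real.rpow_one, mul_inv, Real.exp_neg, mul_comm δ, ← Real.rpow_def_of_pos hn0, one_div]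
    · simp only [hF, if_neg hn]; simp
  have hnn : ∀ n v, 0 ≤ F n v := by
    intro n v
    simp only [hF]
    split_ifs
    · refine mul_nonneg (by positivity) (Set.indicator_nonneg (fun v _ => by positivity) _)
    · exact le_refl _
  have hsum : Summable fun n : ℕ => if n.Prime then (n:ℝ)^(-(1+δ)) else 0 := by
    refine Summable.of_nonneg_of_le (fun n => by split_ifs <;> positivity) (fun n => ?_) (Real.summable_nat_rpow.mpr (by linarith : -(1+δ) < -1))
    split_ifs
    · exact le_refl _
    · positivity
  have key := hasSum_integral_of_summable_integral_norm (F := F) (μ := volume) (fun n => (hint n).1) (by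
    simp_rw [Real.norm_eq_abs, fun n v => abs_of_nonneg (hnn n v), fun n => (hint n).2]; exact hsum)
  have e1 : ∀ v : ℝ, ∑' n, F n v = PA (Real.exp v) * (δ * Real.exp (-(δ*v))) := by
    intro v
    rw [tsum_eq_sum (s := Finset.Ioc 0 ⌊Real.exp v⌋₊), PA, Finset.sum_mul, Finset.sum_filter]
    · refine Finset.sum_congr rfl fun n hn => ?_
      simp only [hF]
      split_ifs with hp
      · rw [Finset.mem_Ioc, Nat.le_floor_iff (Real.exp_pos v).le] at hn
        rw [Set.indicator_of_mem]
        rw [Set.mem_Ici, Real.log_le_iff_le_exp (by exact_mod_cast hn.1)]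
        exact hn.2
      · rfl
    · intro n hn
      simp only [hF]
      split_ifs with hp
      · rw [Finset.mem_Ioc, Nat.le_floor_iff (Real.exp_pos v).le] at hn
        rw [Set.indicator_of_notMem, mul_zero]
        rw [Set.mem_Ici, Real.log_le_iff_le_exp (by exact_mod_cast hp.pos)]
        intro h; exact hn ⟨hp.pos, h⟩
      · rfl
  simp_rw [e1, fun n => (hint n).2] at key
  rw [PS, key.tsum_eq]
  refine (setIntegral_eq_integral_of_forall_compl_eq_zero fun v hv => ?_).symm
  have : Real.exp v ≤ 1 := Real.exp_le_one_iff.mpr (by simpa using hv)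
  rw [PA_zero (by linarith), zero_mul]

lemma PA_meas : Measurable PA := PA_mono.measurable

lemma err_int {c : ℝ} (hc : ∀ A : ℕ, ∃ C > 0, ∀ x : ℝ, 3 ≤ x →
    |PA x - Real.log (Real.log x) - c| ≤ C / (Real.log x)^(A+1)) :
    IntegrableOn (fun v => PA (Real.exp v) - Real.log v - c) (Set.Ioi 0) := by
  have hm : Measurable fun v => PA (Real.exp v) := PA_meas.comp Real.measurable_exp
  rw [← Set.Ioc_union_Ioi_eq_Ioi (show (0:ℝ) ≤ 2 by norm_num), integrableOn_union]
  constructor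
  · refine Integrable.sub (Integrable.sub ?_ ?_) (integrable_const c)
    · refine Measure.integrableOn_of_bounded (M := PA (Real.exp 2)) (by simp) hm.aestronglyMeasurable ?_
      refine (ae_restrict_iff' measurableSet_Ioc).mpr (Eventually.of_forall fun v hv => ?_)
      rw [Real.norm_eq_abs, abs_of_nonneg (PA_nonneg _)]
      exact PA_mono (Real.exp_le_exp.mpr hv.2)
    · have := (intervalIntegral.intervalIntegrable_log' (a := 0) (b := 2))
      rwa [intervalIntegrable_iff_integrableOn_Ioc_of_le (by norm_num)] at this
  · obtain ⟨C, hC, hb⟩ := hc 1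
    have hi := (integrableOn_Ioi_rpow_of_lt (show (-2:ℝ) < -1 by norm_num) (show (0:ℝ) < 2 by norm_num)).const_mul C
    refine hi.mono' ((hm.sub Real.measurable_log).sub_const c).aestronglyMeasurable ?_
    refine (ae_restrict_iff' measurableSet_Ioi).mpr (Eventually.of_forall fun v hv => ?_)
    have hv2 : 2 < v := hv
    have := hb (Real.exp v) (by linarith [Real.add_one_le_exp v])
    rw [Real.log_exp] at this
    rw [Real.norm_eq_abs]
    refine this.trans (le_of_eq ?_)
    rw [Real.rpow_neg (by linarith)]; norm_num [div_eq_mul_inv]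

lemma PS_tendsto {c : ℝ} (hc : ∀ A : ℕ, ∃ C > 0, ∀ x : ℝ, 3 ≤ x →
    |PA x - Real.log (Real.log x) - c| ≤ C / (Real.log x)^(A+1)) :
    Tendsto (fun δ => PS δ + Real.log δ) (nhdsWithin 0 (Set.Ioi 0)) (nhds (c - Real.eulerMascheroniConstant)) := by
  have he := err_int hc
  set e : ℝ → ℝ := fun v => PA (Real.exp v) - Real.log v - c with hedef
  have hbd : ∀ δ : ℝ, 0 < δ → |PS δ + Real.log δ - (c - Real.eulerMascheroniConstant)| ≤ δ * ∫ v in Set.Ioi (0:ℝ), |e v| := by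
    intro δ hδ
    obtain ⟨hl1, hl2⟩ := log_delta_int hδ
    have hx : IntegrableOn (fun v : ℝ => δ * Real.exp (-(δ*v))) (Set.Ioi 0) := by
      simp_rw [← neg_mul]
      exact (integrableOn_exp_mul_Ioi (by linarith) _).const_mul _
    have hx2 : ∫ v in Set.Ioi (0:ℝ), δ * Real.exp (-(δ*v)) = 1 := by
      simp_rw [← neg_mul]
      rw [integral_const_mul, integral_exp_mul_Ioi (by linarith)]
      simp; field_simp
    have hle : ∀ v ∈ Set.Ioi (0:ℝ), ‖e v * (δ * Real.exp (-(δ*v)))‖ ≤ δ * |e v| := by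
      intro v hv
      have hv : 0 < v := hv
      have : Real.exp (-(δ*v)) ≤ 1 := Real.exp_le_one_iff.mpr (by nlinarith)
      rw [norm_mul, Real.norm_eq_abs, Real.norm_eq_abs, abs_of_pos (by positivity : 0 < δ * Real.exp (-(δ*v))), mul_comm]
      gcongr
      nlinarith
    have hei : IntegrableOn (fun v => e v * (δ * Real.exp (-(δ*v)))) (Set.Ioi 0) := by
      refine (he.abs.const_mul δ).mono' (he.aestronglyMeasurable.mul hx.aestronglyMeasurable) ?_
      exact (ae_restrict_iff' measurableSet_Ioi).mpr (Eventually.of_forall hle)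
    have h1 : PS δ = (∫ v in Set.Ioi (0:ℝ), e v * (δ * Real.exp (-(δ*v)))) + (-Real.eulerMascheroniConstant - Real.log δ) + c := by
      rw [PS_integral hδ, ← hl2]
      have : c = ∫ v in Set.Ioi (0:ℝ), c * (δ * Real.exp (-(δ*v))) := by rw [integral_const_mul, hx2, mul_one]
      conv_rhs => rw [this]
      have hA : IntegrableOn (fun v => e v * (δ * Real.exp (-(δ*v))) + Real.log v * (δ * Real.exp (-(δ*v)))) (Set.Ioi 0) := hei.add hl1
      rw [← integral_add hei hl1, ← integral_add hA (hx.const_mul c)]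
      congr 1; funext v; simp only [hedef]; ring
    set X := ∫ v in Set.Ioi (0:ℝ), e v * (δ * Real.exp (-(δ*v))) with hX
    rw [h1, show X + (-Real.eulerMascheroniConstant - Real.log δ) + c + Real.log δ - (c - Real.eulerMascheroniConstant) = X by ring,
      ← integral_const_mul, ← Real.norm_eq_abs, hX]
    exact norm_integral_le_of_norm_le (he.abs.const_mul δ) ((ae_restrict_iff' measurableSet_Ioi).mpr (Eventually.of_forall hle))
  rw [tendsto_iff_norm_sub_tendsto_zero]
  have ht : Tendsto (fun δ : ℝ => δ * ∫ v in Set.Ioi (0:ℝ), |e v|) (nhdsWithin 0 (Set.Ioi 0)) (nhds 0) := by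
    have : Tendsto (fun δ : ℝ => δ * ∫ v in Set.Ioi (0:ℝ), |e v|) (nhds 0) (nhds (0 * ∫ v in Set.Ioi (0:ℝ), |e v|)) :=
      tendsto_id.mul_const _
    rw [zero_mul] at this
    exact this.mono_left nhdsWithin_le_nhds
  refine squeeze_zero' (Eventually.of_forall fun _ => norm_nonneg _) ?_ ht
  filter_upwards [self_mem_nhdsWithin] with δ hδ using hbd δ hδ

lemma PS_primes (δ : ℝ) : PS δ = ∑' p : Nat.Primes, ((p:ℕ):ℝ)^(-(1+δ)) := by
  rw [PS]
  exact (tsum_subtype {p : ℕ | p.Prime} (fun n => (n:ℝ)^(-(1+δ)))).symm ▸ (by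
    congr 1; funext n; simp [Set.indicator_apply])

noncomputable def TT (z : ℝ) : ℝ := -Real.log (1 - z) - z

lemma TT_bound {z : ℝ} (h0 : 0 ≤ z) (h1 : z ≤ 1/2) : |TT z| ≤ 2 * z^2 := by
  have h := Real.abs_log_sub_add_sum_range_le (x := z) (by rw [abs_of_nonneg h0]; linarith) 1
  simp at h
  rw [abs_of_nonneg h0] at h
  rw [TT, show -Real.log (1-z) - z = -(z + Real.log (1-z)) by ring, abs_neg]
  refine h.trans ?_
  rw [div_le_iff₀ (by linarith)]
  nlinarith [sq_nonneg z]

lemma TT_sum {z : ℝ} (h0 : 0 ≤ z) (h1 : z ≤ 1/2) : TT z = ∑' k : ℕ, z^(k+2) / (k+2) := by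
  have h := Real.hasSum_pow_div_log_of_abs_lt_one (x := z) (by rw [abs_of_nonneg h0]; linarith)
  have h2 := h.summable.tsum_eq_zero_add
  rw [h.tsum_eq] at h2
  rw [TT, h2]
  simp
  congr 1; funext k; rw [show (k:ℝ)+1+1 = k+2 by ring]

lemma prime_rpow_le {p : ℕ} (hp : p.Prime) {δ : ℝ} (hδ : 0 ≤ δ) : 0 ≤ (p:ℝ)^(-(1+δ)) ∧ (p:ℝ)^(-(1+δ)) ≤ (p:ℝ)⁻¹ ∧ (p:ℝ)⁻¹ ≤ 1/2 := by
  have h2 : (2:ℝ) ≤ p := by exact_mod_cast hp.two_le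
  refine ⟨by positivity, ?_, ?_⟩
  · rw [← Real.rpow_neg_one]
    exact Real.rpow_le_rpow_of_exponent_le (by linarith) (by linarith)
  · rw [one_div]; exact inv_anti₀ (by norm_num) h2

lemma zeta_log {δ : ℝ} (hδ : 0 < δ) : Real.log (riemannZeta ((1+δ:ℝ):ℂ)).re = ∑' p : Nat.Primes, -Real.log (1 - ((p:ℕ):ℝ)^(-(1+δ))) := by
  have h := riemannZeta_eulerProduct_exp_log (s := ((1+δ:ℝ):ℂ)) (by simp; linarith)
  have e : ∀ p : Nat.Primes, -Complex.log (1 - ((p:ℕ):ℂ)^(-((1+δ:ℝ):ℂ))) = ((-Real.log (1 - ((p:ℕ):ℝ)^(-(1+δ))) : ℝ) : ℂ) := by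
    intro p
    obtain ⟨h1, h2, h3⟩ := prime_rpow_le p.2 hδ.le
    rw [Complex.ofReal_neg, Complex.ofReal_log (by linarith), Complex.ofReal_sub, Complex.ofReal_cpow (by positivity)]
    simp
  simp_rw [e] at h
  rw [← Complex.ofReal_tsum, ← Complex.ofReal_exp] at h
  rw [← h, Complex.ofReal_re, Real.log_exp]

lemma primes_sq_summable : Summable fun p : Nat.Primes => 2 * (((p:ℕ):ℝ)⁻¹)^2 := by
  refine Summable.mul_left _ ?_
  have h : Summable fun n : ℕ => ((n:ℝ)⁻¹)^2 := by
    simp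
  exact h.comp_injective Subtype.val_injective

lemma TT_p_bound (p : Nat.Primes) {δ : ℝ} (hδ : 0 ≤ δ) : ‖TT (((p:ℕ):ℝ)^(-(1+δ)))‖ ≤ 2 * (((p:ℕ):ℝ)⁻¹)^2 := by
  obtain ⟨h1, h2, h3⟩ := prime_rpow_le p.2 hδ
  refine (TT_bound h1 (by linarith)).trans ?_
  gcongr

lemma PS_eq {δ : ℝ} (hδ : 0 < δ) : PS δ = Real.log (riemannZeta ((1+δ:ℝ):ℂ)).re - ∑' p : Nat.Primes, TT (((p:ℕ):ℝ)^(-(1+δ))) := by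
  have s1 : Summable fun p : Nat.Primes => TT (((p:ℕ):ℝ)^(-(1+δ))) :=
    primes_sq_summable.of_norm_bounded (fun p => TT_p_bound p hδ.le)
  have s2 : Summable fun p : Nat.Primes => ((p:ℕ):ℝ)^(-(1+δ)) :=
    (Real.summable_nat_rpow.mpr (by linarith : -(1+δ) < -1)).comp_injective Subtype.val_injective
  rw [zeta_log hδ, PS_primes, eq_sub_iff_add_eq, ← s2.tsum_add s1]
  congr 1; funext p; rw [TT]; ring

lemma mertens_eq : mertensB1 = Real.eulerMascheroniConstant - ∑' p : Nat.Primes, TT (((p:ℕ):ℝ)^(-(1+0:ℝ))) := by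
  rw [mertensB1]
  congr 2; funext p
  obtain ⟨h1, h2, h3⟩ := prime_rpow_le p.2 (le_refl 0)
  rw [TT_sum h1 (by linarith)]
  congr 1; funext k
  rw [add_zero, Real.rpow_neg_one, inv_pow]
  have : ((p:ℕ):ℝ) ≠ 0 := by exact_mod_cast p.2.ne_zero
  field_simp

lemma const_eq {c : ℝ} (hc : ∀ A : ℕ, ∃ C > 0, ∀ x : ℝ, 3 ≤ x →
    |PA x - Real.log (Real.log x) - c| ≤ C / (Real.log x)^(A+1)) : c = mertensB1 := by
  have h1 := PS_tendsto hc
  have h2 : Tendsto (fun δ : ℝ => ∑' p : Nat.Primes, TT (((p:ℕ):ℝ)^(-(1+δ)))) (nhdsWithin 0 (Set.Ioi 0))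
      (nhds (∑' p : Nat.Primes, TT (((p:ℕ):ℝ)^(-(1+0:ℝ))))) := by
    refine tendsto_tsum_of_dominated_convergence primes_sq_summable (fun p => ?_) ?_
    · refine Tendsto.mono_left ?_ nhdsWithin_le_nhds
      obtain ⟨h1, h2, h3⟩ := prime_rpow_le p.2 (le_refl 0)
      have hp : ((p:ℕ):ℝ) ≠ 0 := by exact_mod_cast p.2.ne_zero
      have hc1 : ContinuousAt (fun δ : ℝ => ((p:ℕ):ℝ)^(-(1+δ))) 0 :=
        ContinuousAt.rpow continuousAt_const (by fun_prop) (Or.inl hp)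
      have hc2 : ContinuousAt TT (((p:ℕ):ℝ)^(-(1+0:ℝ))) := by
        unfold TT
        have : 1 - ((p:ℕ):ℝ)^(-(1+0:ℝ)) ≠ 0 := (sub_pos.mpr (lt_of_le_of_lt (h2.trans h3) (by norm_num))).ne'
        fun_prop (disch := assumption)
      exact ContinuousAt.comp (f := fun δ : ℝ => ((p:ℕ):ℝ)^(-(1+δ))) hc2 hc1
    · filter_upwards [self_mem_nhdsWithin] with δ hδ p
      exact TT_p_bound p (le_of_lt hδ)
  have h3 : Tendsto (fun δ : ℝ => Real.log (riemannZeta ((1+δ:ℝ):ℂ)).re + Real.log δ) (nhdsWithin 0 (Set.Ioi 0)) (nhds 0) := by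
    have h := (Asymptotics.isLittleO_one_iff ℝ).mp log_riemannZeta_add_log_sub_isLittleO_ofReal
    have ht : Tendsto (fun δ : ℝ => 1 + δ) (nhdsWithin 0 (Set.Ioi 0)) (nhdsWithin 1 (Set.Ioi 1)) := by
      refine tendsto_nhdsWithin_iff.mpr ⟨?_, ?_⟩
      · refine Tendsto.mono_left ?_ nhdsWithin_le_nhds
        have : Continuous fun δ : ℝ => 1 + δ := by fun_prop
        simpa using this.tendsto 0
      · filter_upwards [self_mem_nhdsWithin] with δ hδ
        have : 0 < δ := hδ
        simpa using this
    have := h.comp ht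
    refine this.congr fun δ => ?_
    simp
  have h4 : Tendsto (fun δ => PS δ + Real.log δ) (nhdsWithin 0 (Set.Ioi 0)) (nhds (0 - ∑' p : Nat.Primes, TT (((p:ℕ):ℝ)^(-(1+0:ℝ))))) := by
    refine (h3.sub h2).congr' ?_
    filter_upwards [self_mem_nhdsWithin] with δ hδ
    rw [PS_eq hδ]; ring
  have := tendsto_nhds_unique h1 h4
  rw [mertens_eq]; linarith

lemma mertens2 (A : ℕ) : ∃ C > 0, ∀ x : ℝ, 3 ≤ x →
    |PA x - Real.log (Real.log x) - mertensB1| ≤ C / (Real.log x)^(A+1) := by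
  obtain ⟨c, hc⟩ := PA_asymp
  rw [← const_eq hc]; exact hc A

lemma omega_sum (N : ℕ) : ∑ n ∈ Finset.Icc 1 N, (n.primeFactors.card : ℝ)
    = ∑ p ∈ Finset.Ioc 0 N with p.Prime, ((N / p : ℕ) : ℝ) := by
  have h : ∀ n ∈ Finset.Icc 1 N, (n.primeFactors.card : ℝ)
      = ∑ p ∈ Finset.Ioc 0 N with p.Prime, if p ∣ n then (1:ℝ) else 0 := by
    intro n hn
    rw [Finset.mem_Icc] at hn
    rw [Finset.sum_boole]
    congr 2
    ext p
    simp only [Nat.mem_primeFactors, Finset.mem_filter, Finset.mem_Ioc]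
    constructor
    · rintro ⟨a, b, c⟩
      exact ⟨⟨⟨a.pos, (Nat.le_of_dvd (by omega) b).trans hn.2⟩, a⟩, b⟩
    · rintro ⟨⟨_, a⟩, b⟩
      exact ⟨a, b, by omega⟩
  rw [Finset.sum_congr rfl h, Finset.sum_comm]
  refine Finset.sum_congr rfl fun p hp => ?_
  rw [Finset.sum_boole, ← Nat.Ioc_filter_dvd_card_eq_div]
  congr 2

lemma large_sum (N y : ℕ) (hy : 0 < y) :
    ∑ p ∈ Finset.Ioc (N / y) N with p.Prime, ((N / p : ℕ) : ℝ)
      = ∑ m ∈ Finset.Icc 1 y, (((Finset.Ioc (N / y) (N / m)).filter Nat.Prime).card : ℝ) := by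
  have h : ∀ m ∈ Finset.Icc 1 y, (((Finset.Ioc (N / y) (N / m)).filter Nat.Prime).card : ℝ)
      = ∑ p ∈ Finset.Ioc (N / y) N with p.Prime, if m ≤ N / p then (1:ℝ) else 0 := by
    intro m hm
    rw [Finset.mem_Icc] at hm
    rw [Finset.sum_boole]
    congr 2
    ext p
    simp only [Finset.mem_filter, Finset.mem_Ioc]
    constructor
    · rintro ⟨⟨a, b⟩, c⟩
      rw [Nat.le_div_iff_mul_le (by omega)] at b
      refine ⟨⟨⟨a, ?_⟩, c⟩, ?_⟩
      · nlinarith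
      · rw [Nat.le_div_iff_mul_le c.pos]; linarith
    · rintro ⟨⟨⟨a, b⟩, c⟩, d⟩
      rw [Nat.le_div_iff_mul_le c.pos] at d
      refine ⟨⟨a, ?_⟩, c⟩
      rw [Nat.le_div_iff_mul_le (by omega)]; linarith
  rw [Finset.sum_congr rfl h, Finset.sum_comm]
  refine Finset.sum_congr rfl fun p hp => ?_
  simp only [Finset.mem_filter, Finset.mem_Ioc] at hp
  rw [Finset.sum_boole]
  congr 1
  have : N / p < y := by
    rw [Nat.div_lt_iff_lt_mul hp.2.pos]
    have := (Nat.div_lt_iff_lt_mul hy).mp hp.1.1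
    linarith
  have e : (Finset.Icc 1 y).filter (fun m => m ≤ N / p) = Finset.Icc 1 (N / p) := by
    ext m; simp only [Finset.mem_filter, Finset.mem_Icc]; omega
  rw [e]; simp

lemma smallp_sum {x : ℝ} (hx : 0 ≤ x) (z : ℝ) (hz : 0 ≤ z) :
    |(∑ p ∈ Finset.Ioc 0 ⌊z⌋₊ with p.Prime, ((⌊x⌋₊ / p : ℕ) : ℝ)) - x * PA z| ≤ z := by
  rw [PA, Finset.mul_sum, ← Finset.sum_sub_distrib]
  refine (Finset.abs_sum_le_sum_abs _ _).trans ?_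
  refine (Finset.sum_le_card_nsmul _ _ 1 ?_).trans ?_
  · intro p hp
    rw [← Nat.floor_div_natCast]
    have h1 := Nat.floor_le (show 0 ≤ x / p by positivity)
    have h2 := Nat.lt_floor_add_one (x / p)
    rw [mul_one_div, abs_le]; constructor <;> linarith
  · rw [nsmul_eq_mul, mul_one]
    refine le_trans ?_ (Nat.floor_le hz)
    have := Finset.card_filter_le (Finset.Ioc 0 ⌊z⌋₊) Nat.Prime
    rw [Nat.card_Ioc] at this
    exact_mod_cast this

lemma subst_int {x m y : ℝ} (hm : 1 ≤ m) (hmy : m ≤ y) (hyx : y < x) :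
    ∫ t in (x / y)..(x / m), (Real.log t)⁻¹ = x * ∫ u in m..y, (u^2 * (Real.log x - Real.log u))⁻¹ := by
  have h := intervalIntegral.integral_comp_mul_deriv' (a := m) (b := y) (f := fun u => x / u)
    (f' := fun u => -(x / u^2)) (g := fun t => (Real.log t)⁻¹) ?_ ?_ ?_
  · rw [intervalIntegral.integral_symm, ← h, ← intervalIntegral.integral_neg, ← intervalIntegral.integral_const_mul]
    refine intervalIntegral.integral_congr fun u hu => ?_
    rw [Set.uIcc_of_le hmy] at hu
    have : 0 < u := by linarith [hu.1]
    simp only [Function.comp]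
    rw [Real.log_div (by linarith [hu.1, hu.2]) (by linarith)]
    rw [mul_inv]; ring
  · intro u hu
    rw [Set.uIcc_of_le hmy] at hu
    have : u ≠ 0 := by linarith [hu.1]
    have := (hasDerivAt_inv this).const_mul x
    simpa [div_eq_mul_inv] using this
  · refine ContinuousOn.neg (continuousOn_const.div (by fun_prop) fun u hu => ?_)
    rw [Set.uIcc_of_le hmy] at hu
    have : 0 < u := by linarith [hu.1]
    positivity
  · rw [Set.uIcc_of_le hmy]
    refine ContinuousOn.inv₀ (Real.continuousOn_log.mono ?_) ?_
    · rintro _ ⟨u, hu, rfl⟩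
      have : 0 < u := by linarith [hu.1]
      have : 0 < x := by linarith [hu.2]
      simp; constructor <;> linarith
    · rintro _ ⟨u, hu, rfl⟩
      have : 0 < u := by linarith [hu.1]
      refine (Real.log_pos ?_).ne'
      rw [lt_div_iff₀ this]; linarith [hu.2]

lemma floor_sum {y : ℕ} (hy : 1 ≤ y) {g : ℝ → ℝ} (hg : ContinuousOn g (Set.Icc 1 (y:ℝ))) :
    ∑ m ∈ Finset.Icc 1 y, ∫ u in (m:ℝ)..y, g u = ∫ u in Set.Icc 1 (y:ℝ), (u - Int.fract u) * g u := by
  have hi : IntegrableOn g (Set.Icc 1 (y:ℝ)) := hg.integrableOn_Icc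
  have h : ∀ m ∈ Finset.Icc 1 y, ∫ u in (m:ℝ)..y, g u
      = ∫ u in Set.Icc 1 (y:ℝ), (Set.Ici (m:ℝ)).indicator g u := by
    intro m hm
    rw [Finset.mem_Icc] at hm
    have h1 : (1:ℝ) ≤ m := by exact_mod_cast hm.1
    have h2 : (m:ℝ) ≤ y := by exact_mod_cast hm.2
    rw [intervalIntegral.integral_of_le h2, ← integral_Icc_eq_integral_Ioc,
      setIntegral_indicator measurableSet_Ici]
    congr 2
    ext u; simp only [Set.mem_Icc, Set.mem_inter_iff, Set.mem_Ici]
    constructor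
    · rintro ⟨a, b⟩; exact ⟨⟨by linarith, b⟩, a⟩
    · rintro ⟨⟨a, b⟩, c⟩; exact ⟨c, b⟩
  rw [Finset.sum_congr rfl h, ← integral_finsetSum]
  · refine setIntegral_congr_fun measurableSet_Icc fun u hu => ?_
    have e : (Finset.Icc 1 y).filter (fun m : ℕ => (m:ℝ) ≤ u) = Finset.Icc 1 ⌊u⌋₊ := by
      ext m; simp only [Finset.mem_filter, Finset.mem_Icc]
      rw [Nat.le_floor_iff (by linarith [hu.1])]
      constructor
      · rintro ⟨⟨a, b⟩, c⟩; exact ⟨a, c⟩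
      · rintro ⟨a, b⟩; exact ⟨⟨a, by exact_mod_cast b.trans hu.2⟩, b⟩
    simp only [Set.indicator_apply, Set.mem_Ici]
    rw [← Finset.sum_filter, e, Finset.sum_const, Nat.card_Icc, nsmul_eq_mul]
    congr 1
    rw [Int.self_sub_fract, Nat.add_sub_cancel]
    exact natCast_floor_eq_intCast_floor (by linarith [hu.1])
  · intro m hm
    exact hi.indicator measurableSet_Ici

lemma loglog_int {L y : ℝ} (hy : 1 ≤ y) (hL : Real.log y < L) :
    ∫ u in Set.Icc 1 y, (u * (L - Real.log u))⁻¹ = Real.log L - Real.log (L - Real.log y) := by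
  rw [integral_Icc_eq_integral_Ioc, ← intervalIntegral.integral_of_le hy]
  have hp : ∀ u ∈ Set.uIcc 1 y, 0 < u ∧ 0 < L - Real.log u := by
    intro u hu
    rw [Set.uIcc_of_le hy] at hu
    have : 0 < u := by linarith [hu.1]
    exact ⟨this, by linarith [Real.log_le_log this hu.2]⟩
  rw [intervalIntegral.integral_eq_sub_of_hasDerivAt (f := fun u => -Real.log (L - Real.log u))]
  · simp; ring
  · intro u hu
    obtain ⟨h1, h2⟩ := hp u hu
    have : HasDerivAt (fun u => -Real.log (L - Real.log u)) (-(-u⁻¹ / (L - Real.log u))) u := (((Real.hasDerivAt_log h1.ne').const_sub L).log h2.ne').neg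
    have e : (u * (L - Real.log u))⁻¹ = -(-u⁻¹ / (L - Real.log u)) := by rw [mul_inv]; ring
    rw [e]; exact this
  · refine ContinuousOn.intervalIntegrable ?_
    refine ContinuousOn.inv₀ (continuousOn_id.mul (continuousOn_const.sub (Real.continuousOn_log.mono ?_))) ?_
    · intro u hu; exact (hp u hu).1.ne'
    · intro u hu; obtain ⟨h1, h2⟩ := hp u hu; exact (mul_pos h1 h2).ne'

lemma log_pow_sqrt (n : ℕ) : ∃ K > (0:ℝ), ∀ u : ℝ, 1 ≤ u → (Real.log u)^n ≤ K * u^(1/2:ℝ) := by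
  refine ⟨2^n * n.factorial, by positivity, fun u hu => ?_⟩
  have h := log_pow_le n (x := u^(1/2:ℝ)) (Real.one_le_rpow hu (by norm_num))
  rw [Real.log_rpow (by linarith), mul_pow] at h
  calc (Real.log u)^n = 2^n * ((1/2)^n * Real.log u ^ n) := by
        rw [← mul_assoc, ← mul_pow]; norm_num
    _ ≤ 2^n * (n.factorial * u^(1/2:ℝ)) := by gcongr
    _ = _ := by ring

lemma tail_int (n : ℕ) : ∃ K > (0:ℝ),
    IntegrableOn (fun u : ℝ => Int.fract u * (Real.log u)^n / u^2) (Set.Ioi 1) ∧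
    IntegrableOn (fun u : ℝ => (Real.log u)^n / u^2) (Set.Ioi 1) ∧
    ∀ y : ℝ, 1 ≤ y → |∫ u in Set.Ioi y, Int.fract u * (Real.log u)^n / u^2| ≤ K * y^(-(1/2):ℝ) := by
  obtain ⟨K, hK, h⟩ := log_pow_sqrt n
  have hb : ∀ u : ℝ, 1 < u → ‖(Real.log u)^n / u^2‖ ≤ K * u^(-(3/2):ℝ) := by
    intro u hu
    have hl := Real.log_nonneg hu.le
    rw [Real.norm_eq_abs, abs_of_nonneg (by positivity), div_le_iff₀ (by positivity)]
    refine (h u hu.le).trans (le_of_eq ?_)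
    rw [mul_assoc, ← Real.rpow_natCast, ← Real.rpow_add (by linarith)]
    norm_num
  have hb2 : ∀ u : ℝ, 1 < u → ‖Int.fract u * (Real.log u)^n / u^2‖ ≤ K * u^(-(3/2):ℝ) := by
    intro u hu
    refine le_trans ?_ (hb u hu)
    rw [mul_div_assoc, norm_mul, Real.norm_eq_abs, abs_of_nonneg (Int.fract_nonneg u)]
    exact mul_le_of_le_one_left (norm_nonneg _) (Int.fract_lt_one u).le
  have hd : ∀ y : ℝ, 1 ≤ y → IntegrableOn (fun u : ℝ => K * u^(-(3/2):ℝ)) (Set.Ioi y) := fun y hy =>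
    (integrableOn_Ioi_rpow_of_lt (by norm_num) (by linarith)).const_mul K
  have hm1 : Measurable (fun u : ℝ => Int.fract u * (Real.log u)^n / u^2) := by
    have := measurable_fract (R := ℝ)
    fun_prop
  refine ⟨2 * K, by positivity, ?_, ?_, ?_⟩
  · refine (hd 1 le_rfl).mono' hm1.aestronglyMeasurable ?_
    exact (ae_restrict_iff' measurableSet_Ioi).mpr (ae_of_all _ hb2)
  · refine (hd 1 le_rfl).mono' (by fun_prop : Measurable (fun u : ℝ => (Real.log u)^n / u^2)).aestronglyMeasurable ?_
    exact (ae_restrict_iff' measurableSet_Ioi).mpr (ae_of_all _ hb)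
  · intro y hy
    rw [← Real.norm_eq_abs]
    refine (norm_integral_le_of_norm_le (hd y hy) ?_).trans (le_of_eq ?_)
    · exact (ae_restrict_iff' measurableSet_Ioi).mpr (ae_of_all _ fun u hu => hb2 u (lt_of_le_of_lt hy hu))
    · rw [integral_const_mul, integral_Ioi_rpow_of_lt (by norm_num) (by linarith)]
      norm_num; ring

lemma geom_id {L l : ℝ} (hL : L ≠ 0) (hl : L - l ≠ 0) (k : ℕ) :
    (L - l)⁻¹ = ∑ n ∈ Finset.range k, l^n / L^(n+1) + l^k / (L^k * (L - l)) := by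
  induction k with
  | zero => simp
  | succ k ih =>
    rw [ih, Finset.sum_range_succ, add_assoc]
    congr 1
    field_simp
    ring

lemma expansion (k : ℕ) : ∃ C > (0:ℝ), ∀ L y : ℝ, 1 ≤ y → 1 ≤ L → Real.log y ≤ L / 2 →
    L^(2*(k+1)) ≤ y →
    |(∫ u in Set.Icc 1 y, Int.fract u * (u^2 * (L - Real.log u))⁻¹)
      - ∑ n ∈ Finset.range k, cconst n * (n.factorial : ℝ) / L^(n+1)| ≤ C / L^(k+1) := by
  choose K hK hi1 hi2 ht using tail_int
  set M : ℝ := ∫ u in Set.Ioi (1:ℝ), (Real.log u)^k / u^2 with hM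
  have hM0 : 0 ≤ M := setIntegral_nonneg measurableSet_Ioi fun u hu => by
    have := Real.log_nonneg (le_of_lt hu)
    positivity
  refine ⟨2 * M + ∑ n ∈ Finset.range k, K n + 1, by
    have := Finset.sum_nonneg (s := Finset.range k) (fun n _ => (hK n).le); linarith, ?_⟩
  intro L y hy hL hly hLy
  have hL0 : 0 < L := by linarith
  set f : ℕ → ℝ → ℝ := fun n u => Int.fract u * (Real.log u)^n / u^2 with hf
  set F : ℝ → ℝ := fun u => Int.fract u * (u^2 * (L - Real.log u))⁻¹ with hF
  have hc : ∀ n, cconst n * (n.factorial:ℝ) = (∫ u in Set.Ioc 1 y, f n u) + ∫ u in Set.Ioi y, f n u := by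
    intro n
    rw [cconst, ← setIntegral_union (Set.Ioc_disjoint_Ioi le_rfl) measurableSet_Ioi
      ((hi1 n).mono_set Set.Ioc_subset_Ioi_self) ((hi1 n).mono_set (Set.Ioi_subset_Ioi hy)), Set.Ioc_union_Ioi_eq_Ioi hy]
    have : (n.factorial:ℝ) ≠ 0 := by positivity
    field_simp
  have hp : ∀ u ∈ Set.Ioc 1 y, 0 < u ∧ 0 ≤ Real.log u ∧ L / 2 ≤ L - Real.log u := by
    intro u hu
    have : 0 < u := by linarith [hu.1]
    exact ⟨this, Real.log_nonneg hu.1.le, by linarith [Real.log_le_log this hu.2]⟩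
  have hFi : IntegrableOn F (Set.Ioc 1 y) := by
    refine Measure.integrableOn_of_bounded (M := 2) (by simp) ?_ ?_
    · have := measurable_fract (R := ℝ)
      exact (by fun_prop : Measurable F).aestronglyMeasurable
    · refine (ae_restrict_iff' measurableSet_Ioc).mpr (ae_of_all _ fun u hu => ?_)
      obtain ⟨h1, h2, h3⟩ := hp u hu
      have h4 : 0 < L - Real.log u := by linarith
      rw [hF, norm_mul, Real.norm_eq_abs, abs_of_nonneg (Int.fract_nonneg u), Real.norm_eq_abs,
        abs_of_pos (by positivity)]
      have : (u^2 * (L - Real.log u))⁻¹ ≤ 2 := by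
        rw [inv_le_comm₀ (by positivity) (by norm_num)]
        nlinarith [hu.1]
      refine le_trans (mul_le_of_le_one_left (by positivity) (Int.fract_lt_one u).le) this
  have hfi : ∀ n, IntegrableOn (f n) (Set.Ioc 1 y) := fun n => (hi1 n).mono_set Set.Ioc_subset_Ioi_self
  have e1 : (∫ u in Set.Ioc 1 y, F u) - ∑ n ∈ Finset.range k, (∫ u in Set.Ioc 1 y, f n u) / L^(n+1)
      = ∫ u in Set.Ioc 1 y, (F u - ∑ n ∈ Finset.range k, f n u / L^(n+1)) := by
    rw [integral_sub hFi, integral_finsetSum]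
    · simp only [integral_div]
    · intro n _; exact (hfi n).div_const _
    · exact integrable_finsetSum _ fun n _ => (hfi n).div_const _
  have b1 : |∫ u in Set.Ioc 1 y, (F u - ∑ n ∈ Finset.range k, f n u / L^(n+1))| ≤ 2 / L^(k+1) * M := by
    rw [← Real.norm_eq_abs]
    refine (norm_integral_le_of_norm_le (g := fun u => 2 / L^(k+1) * ((Real.log u)^k / u^2))
      (((hi2 k).mono_set Set.Ioc_subset_Ioi_self).const_mul _) ?_).trans ?_
    · refine (ae_restrict_iff' measurableSet_Ioc).mpr (ae_of_all _ fun u hu => ?_)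
      obtain ⟨h1, h2, h3⟩ := hp u hu
      have h4 : 0 < L - Real.log u := by linarith
      have : F u - ∑ n ∈ Finset.range k, f n u / L^(n+1)
          = Int.fract u * ((Real.log u)^k / u^2 * (L^k * (L - Real.log u))⁻¹) := by
        rw [hF]
        simp only
        rw [mul_inv, geom_id hL0.ne' h4.ne' k, mul_add, mul_add, Finset.mul_sum, Finset.mul_sum]
        have : ∀ n, Int.fract u * ((u^2)⁻¹ * (Real.log u ^ n / L^(n+1))) = f n u / L^(n+1) := by
          intro n; rw [hf]; ring
        simp only [this]
        ring
      rw [this, norm_mul, Real.norm_eq_abs, abs_of_nonneg (Int.fract_nonneg u), Real.norm_eq_abs,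
        abs_of_nonneg (by positivity)]
      refine le_trans (mul_le_of_le_one_left (by positivity) (Int.fract_lt_one u).le) ?_
      rw [mul_comm]
      refine mul_le_mul_of_nonneg_right ?_ (by positivity)
      rw [inv_eq_one_div, div_le_div_iff₀ (by positivity) (by positivity), pow_succ]
      nlinarith [pow_pos hL0 k]
    · rw [integral_const_mul]
      refine mul_le_mul_of_nonneg_left ?_ (by positivity)
      refine setIntegral_mono_set (hi2 k) ?_ (Set.Ioc_subset_Ioi_self.eventuallyLE)
      refine (ae_restrict_iff' measurableSet_Ioi).mpr (ae_of_all _ fun u hu => ?_)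
      have := Real.log_nonneg (le_of_lt hu)
      simp only [Pi.zero_apply]; positivity
  have hys : y^(-(1/2):ℝ) ≤ 1 / L^(k+1) := by
    rw [Real.rpow_neg (by linarith), ← one_div]
    refine one_div_le_one_div_of_le (by positivity) ?_
    rw [← Real.sqrt_eq_rpow]
    refine Real.le_sqrt_of_sq_le ?_
    rw [← pow_mul, mul_comm]; exact hLy
  have b2 : |∑ n ∈ Finset.range k, (∫ u in Set.Ioi y, f n u) / L^(n+1)| ≤ (∑ n ∈ Finset.range k, K n) / L^(k+1) := by
    refine (Finset.abs_sum_le_sum_abs _ _).trans ?_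
    rw [Finset.sum_div]
    refine Finset.sum_le_sum fun n _ => ?_
    rw [abs_div, abs_of_pos (show 0 < L^(n+1) by positivity)]
    refine (div_le_self (abs_nonneg _) (one_le_pow₀ hL)).trans ((ht n y hy).trans ?_)
    rw [div_eq_mul_one_div (K n)]
    exact mul_le_mul_of_nonneg_left hys (hK n).le
  rw [integral_Icc_eq_integral_Ioc]
  simp only [hc, add_div, Finset.sum_add_distrib]
  rw [← sub_sub, e1]
  refine (abs_sub _ _).trans ?_
  have : 0 < 1 / L^(k+1) := by positivity
  calc _ ≤ 2 / L^(k+1) * M + (∑ n ∈ Finset.range k, K n) / L^(k+1) + 1 / L^(k+1) := by linarith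
    _ = _ := by ring

lemma sum_ints {x : ℝ} {y : ℕ} (hy : 1 ≤ y) (hyx : (y:ℝ) < x) :
    ∑ m ∈ Finset.Icc 1 y, ∫ t in (x / y)..(x / m), (Real.log t)⁻¹
      = x * (Real.log (Real.log x) - Real.log (Real.log (x / y)))
        - x * ∫ u in Set.Icc 1 (y:ℝ), Int.fract u * (u^2 * (Real.log x - Real.log u))⁻¹ := by
  have hy1 : (1:ℝ) ≤ y := by exact_mod_cast hy
  have hx0 : 0 < x := by linarith
  have hp : ∀ u ∈ Set.Icc 1 (y:ℝ), 0 < u ∧ 0 < Real.log x - Real.log u := by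
    intro u hu
    have : 0 < u := by linarith [hu.1]
    exact ⟨this, by linarith [Real.log_lt_log this (lt_of_le_of_lt hu.2 hyx)]⟩
  have hlc : ContinuousOn Real.log (Set.Icc 1 (y:ℝ)) :=
    Real.continuousOn_log.mono fun u hu => (hp u hu).1.ne'
  have hgc : ContinuousOn (fun u : ℝ => (u^2 * (Real.log x - Real.log u))⁻¹) (Set.Icc 1 (y:ℝ)) := by
    refine ContinuousOn.inv₀ ((continuousOn_id.pow 2).mul (continuousOn_const.sub hlc)) ?_
    intro u hu; obtain ⟨h1, h2⟩ := hp u hu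
    positivity
  have hgc2 : ContinuousOn (fun u : ℝ => (u * (Real.log x - Real.log u))⁻¹) (Set.Icc 1 (y:ℝ)) := by
    refine ContinuousOn.inv₀ (continuousOn_id.mul (continuousOn_const.sub hlc)) ?_
    intro u hu; obtain ⟨h1, h2⟩ := hp u hu
    positivity
  have h1 : ∀ m ∈ Finset.Icc 1 y, ∫ t in (x / y)..(x / m), (Real.log t)⁻¹
      = x * ∫ u in (m:ℝ)..y, (u^2 * (Real.log x - Real.log u))⁻¹ := by
    intro m hm
    rw [Finset.mem_Icc] at hm
    exact subst_int (by exact_mod_cast hm.1) (by exact_mod_cast hm.2) hyx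
  rw [Finset.sum_congr rfl h1, ← Finset.mul_sum, floor_sum hy hgc, ← mul_sub]
  congr 1
  rw [Real.log_div hx0.ne' (by positivity), ← loglog_int hy1 (Real.log_lt_log (by linarith) hyx), ← integral_sub]
  · refine setIntegral_congr_fun measurableSet_Icc fun u hu => ?_
    obtain ⟨h1, h2⟩ := hp u hu
    field_simp
  · exact hgc2.integrableOn_Icc
  · have hi := hgc.integrableOn_Icc (μ := volume)
    refine Integrable.mono hi ?_ ?_
    · have := measurable_fract (R := ℝ)
      exact (by fun_prop : Measurable fun u : ℝ => Int.fract u * (u^2 * (Real.log x - Real.log u))⁻¹).aestronglyMeasurable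
    · refine ae_of_all _ fun u => ?_
      rw [norm_mul, Real.norm_eq_abs, abs_of_nonneg (Int.fract_nonneg u)]
      exact mul_le_of_le_one_left (norm_nonneg _) (Int.fract_lt_one u).le

theorem sum_omega_expansion :
    ∀ k : ℕ, 1 ≤ k → ∃ C > (0:ℝ), ∀ᶠ x : ℝ in atTop,
      |(∑ n ∈ Finset.Icc 1 ⌊x⌋₊, (n.primeFactors.card : ℝ)) -
          (x * Real.log (Real.log x) + mertensB1 * x -
            ∑ n ∈ Finset.range k, cconst n * (n.factorial : ℝ) * x / (Real.log x) ^ (n + 1))| ≤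
        C * x / (Real.log x) ^ (k + 1) := by
  intro k _
  obtain ⟨C1, hC1, H1⟩ := expansion k
  obtain ⟨C2, hC2, H2⟩ := mertens2 k
  set B := 2 * (k + 1) with hB
  obtain ⟨C3, hC3, H3⟩ := theta_bound (B + (k + 1))
  obtain ⟨K, hK, H4⟩ := log_pow_sqrt (B + 1)
  refine ⟨1 + C2 * 2^(k+1) + C3 * 2^(B+(k+1)+1) + C1, by positivity, ?_⟩
  filter_upwards [eventually_ge_atTop 9, Real.tendsto_log_atTop.eventually_ge_atTop 4,
    Real.tendsto_log_atTop.eventually_ge_atTop (2 * K)] with x hx9 hL4 hLK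
  set L := Real.log x with hL
  have hL0 : 0 < L := by linarith
  have hx0 : 0 < x := by linarith
  set y := ⌈L^B⌉₊ with hy
  have hLB1 : 1 ≤ L^B := one_le_pow₀ (by linarith)
  have hyL : L^B ≤ y := Nat.le_ceil _
  have hy2 : (y:ℝ) ≤ 2 * L^B := by
    have := Nat.ceil_lt_add_one (show 0 ≤ L^B by positivity)
    linarith
  have hy1 : (1:ℝ) ≤ y := by linarith
  have hy1' : 1 ≤ y := by exact_mod_cast hy1
  have hys : (y:ℝ) ≤ √x := by
    refine hy2.trans ?_
    have h := H4 x (by linarith)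
    rw [← Real.sqrt_eq_rpow, ← hL, pow_succ] at h
    have h2 : K * (2 * L^B) ≤ K * √x := by nlinarith
    exact le_of_mul_le_mul_left h2 hK
  have hs3 : 3 ≤ √x := Real.le_sqrt_of_sq_le (by linarith)
  have hss : √x * √x = x := Real.mul_self_sqrt hx0.le
  have hyx : (y:ℝ) < x := by nlinarith
  have hxy : √x ≤ x / y := by
    rw [le_div_iff₀ (by linarith)]; nlinarith
  have hly : Real.log y ≤ L / 2 := by
    have := Real.log_le_log (by linarith) hys
    rwa [Real.log_sqrt hx0.le] at this
  have hlxy : Real.log (x / y) = L - Real.log y := Real.log_div hx0.ne' (by linarith)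
  have hlz : L / 2 ≤ Real.log (x / y) := by rw [hlxy]; linarith
  have hz3 : 3 ≤ x / y := hs3.trans hxy
  -- expansion
  have b1 := H1 L y hy1 (by linarith) hly hyL
  -- small primes
  have b2 := smallp_sum hx0.le (x / y) (by linarith)
  have b2' : x / y ≤ x / L^(k+1) := by
    refine div_le_div_of_nonneg_left hx0.le (by positivity) (le_trans ?_ hyL)
    exact pow_le_pow_right₀ (by linarith) (by omega)
  have b3 : |PA (x / y) - Real.log (Real.log (x / y)) - mertensB1| ≤ C2 * 2^(k+1) / L^(k+1) := by
    refine (H2 (x / y) hz3).trans ?_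
    rw [mul_div_assoc, ← div_pow, div_eq_mul_inv, ← inv_pow]
    have h0 : 0 < Real.log (x / y) := by linarith
    refine mul_le_mul_of_nonneg_left (pow_le_pow_left₀ (by positivity) ?_ _) hC2.le
    rw [inv_le_comm₀ h0 (by positivity), inv_div]
    exact hlz
  -- large primes
  set E : ℝ := C3 * x / (L/2)^(B+(k+1)) with hE
  have hE0 : 0 ≤ E := by positivity
  have b4 : |(∑ m ∈ Finset.Icc 1 y, (((Finset.Ioc (⌊x⌋₊ / y) (⌊x⌋₊ / m)).filter Nat.Prime).card : ℝ))
      - ∑ m ∈ Finset.Icc 1 y, ∫ t in (x / y)..(x / m), (Real.log t)⁻¹| ≤ y * E := by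
    rw [← Finset.sum_sub_distrib]
    refine (Finset.abs_sum_le_sum_abs _ _).trans ?_
    refine (Finset.sum_le_card_nsmul _ _ E ?_).trans (by simp)
    intro m hm
    rw [Finset.mem_Icc] at hm
    have hm1 : (1:ℝ) ≤ m := by exact_mod_cast hm.1
    have hm2 : (m:ℝ) ≤ y := by exact_mod_cast hm.2
    rw [← Nat.floor_div_natCast, ← Nat.floor_div_natCast]
    refine (prime_count_bound (E := E) (by linarith)
      (div_le_div_of_nonneg_left hx0.le (by linarith) hm2) ?_).trans ?_
    · intro t ht
      have htx : t ≤ x := ht.2.trans (div_le_self hx0.le hm1)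
      have ht3 : 3 ≤ t := hz3.trans ht.1
      have hlt : L / 2 ≤ Real.log t := hlz.trans (Real.log_le_log (by linarith) ht.1)
      refine (H3 t (by linarith)).trans ?_
      rw [hE]
      gcongr
    · have : 2 * (Real.log (x / y))⁻¹ ≤ 1 := by
        rw [← div_eq_mul_inv, div_le_one (by linarith)]; linarith
      exact mul_le_of_le_one_left hE0 this
  have b4' : y * E ≤ C3 * 2^(B+(k+1)+1) * x / L^(k+1) := by
    calc y * E ≤ 2 * L^B * E := by gcongr
      _ = _ := by
        rw [hE, div_pow, pow_add L, pow_succ 2 (B + (k+1))]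
        field_simp
  rw [← large_sum _ _ (by omega), sum_ints hy1' hyx] at b4
  have hsplit : (∑ n ∈ Finset.Icc 1 ⌊x⌋₊, (n.primeFactors.card : ℝ))
      = (∑ p ∈ Finset.Ioc 0 ⌊x / y⌋₊ with p.Prime, ((⌊x⌋₊ / p : ℕ) : ℝ))
        + ∑ p ∈ Finset.Ioc (⌊x⌋₊ / y) ⌊x⌋₊ with p.Prime, ((⌊x⌋₊ / p : ℕ) : ℝ) := by
    rw [omega_sum, Nat.floor_div_natCast, Finset.sum_filter, Finset.sum_filter, Finset.sum_filter,
      Finset.sum_Ioc_consecutive _ (Nat.zero_le _) (Nat.div_le_self _ _)]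
  rw [hsplit]
  have hsum : ∑ n ∈ Finset.range k, cconst n * (n.factorial : ℝ) * x / L ^ (n + 1)
      = x * ∑ n ∈ Finset.range k, cconst n * (n.factorial : ℝ) / L ^ (n + 1) := by
    rw [Finset.mul_sum]; refine Finset.sum_congr rfl fun n _ => by ring
  rw [hsum]
  have b1' := mul_le_mul_of_nonneg_left b1 hx0.le
  have b3' := mul_le_mul_of_nonneg_left b3 hx0.le
  rw [← abs_of_pos hx0, ← abs_mul, abs_of_pos hx0] at b1' b3'
  have hfin : (1 + C2 * 2^(k+1) + C3 * 2^(B+(k+1)+1) + C1) * x / L^(k+1)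
      = x / L^(k+1) + x * (C2 * 2^(k+1) / L^(k+1)) + C3 * 2^(B+(k+1)+1) * x / L^(k+1) + x * (C1 / L^(k+1)) := by
    ring
  rw [hfin]
  have b2'' := b2.trans b2'
  have b4'' := b4.trans b4'
  rw [abs_le] at *
  rw [← hL] at *
  constructor <;> linarith [b1'.1, b1'.2, b2''.1, b2''.2, b3'.1, b3'.2, b4''.1, b4''.2]
end

section
/- Σ_{n ≤ x} (Ω(n) − ω(n)) = x·Σ_p 1/(p(p−1)) + O(√x·log x) as x → ∞, where the sum Σ_p is over all primes p. -/
open Filter Real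
open scoped Classical

noncomputable def gP (n : ℕ) : ℝ := if n.Prime then 1 / ((n : ℝ) * ((n : ℝ) - 1)) else 0

lemma gP_nonneg (n : ℕ) : 0 ≤ gP n := by
  unfold gP
  split_ifs with h
  · have : (2:ℝ) ≤ n := by exact_mod_cast h.two_le
    have : (0:ℝ) < (n:ℝ) - 1 := by linarith
    positivity
  · exact le_rfl

lemma gP_tail (s : ℕ) (hs : 1 ≤ s) (m : ℕ) :
    ∑ i ∈ Finset.range (s + 1 + m), gP i ≤
      ∑ i ∈ Finset.range (s + 1), gP i + 1 / (s:ℝ) - 1 / ((s:ℝ) + m) := by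
  induction m with
  | zero => simp
  | succ m ih =>
    rw [← add_assoc, Finset.sum_range_succ]
    have hs' : (1:ℝ) ≤ s := by exact_mod_cast hs
    have hm : (0:ℝ) ≤ m := Nat.cast_nonneg m
    have : gP (s + 1 + m) ≤ 1 / ((s:ℝ) + m) - 1 / ((s:ℝ) + (m+1)) := by
      have e : 1 / ((s:ℝ) + m) - 1 / ((s:ℝ) + (m+1)) = 1 / (((s:ℝ) + 1 + m) * ((s:ℝ) + 1 + m - 1)) := by
        have h1 : (s:ℝ) + m ≠ 0 := by positivity
        have h2 : (s:ℝ) + (m+1) ≠ 0 := by positivity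
        have h3 : (s:ℝ) + 1 + m ≠ 0 := by positivity
        have h4 : (s:ℝ) + 1 + m - 1 = s + m := by ring
        rw [h4]
        field_simp
        ring
      rw [e]
      unfold gP
      split_ifs
      · push_cast; exact le_rfl
      · have : (0:ℝ) < (s:ℝ) + 1 + m - 1 := by linarith
        positivity
    push_cast
    linarith

lemma gP_range (s : ℕ) (hs : 1 ≤ s) (n : ℕ) :
    ∑ i ∈ Finset.range n, gP i ≤ ∑ i ∈ Finset.range (s + 1), gP i + 1 / (s:ℝ) := by
  have h1 : ∑ i ∈ Finset.range n, gP i ≤ ∑ i ∈ Finset.range (s + 1 + n), gP i :=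
    Finset.sum_le_sum_of_subset_of_nonneg (Finset.range_mono (by omega)) (fun i _ _ => gP_nonneg i)
  have h2 := gP_tail s hs n
  have : (0:ℝ) ≤ 1 / ((s:ℝ) + n) := by positivity
  linarith

lemma gP_summable : Summable gP :=
  summable_of_sum_range_le gP_nonneg (gP_range 1 le_rfl)

lemma gP_tsum : ∑' p : Nat.Primes, 1 / (((p : ℕ) : ℝ) * (((p : ℕ) : ℝ) - 1)) = ∑' n, gP n := by
  have := tsum_subtype {p : ℕ | p.Prime} (fun n : ℕ => 1 / ((n : ℝ) * ((n : ℝ) - 1)))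
  refine Eq.trans this ?_
  apply tsum_congr
  intro n
  simp [gP, Set.indicator]

lemma pointwise (N n L s : ℕ) (hn : 1 ≤ n) (hN : n ≤ N) (hL1 : 1 ≤ L) (hL : N < 2 ^ (L + 1))
    (hs : N < (s + 1) * (s + 1)) :
    ((n.primeFactorsList.length : ℝ) - (n.primeFactors.card : ℝ)) =
      ∑ p ∈ (Finset.range (s + 1)).filter Nat.Prime,
        ∑ k ∈ Finset.Icc 2 L, if p ^ k ∣ n then (1:ℝ) else 0 := by
  have h0 : n.primeFactorsList.length = ∑ p ∈ n.primeFactors, n.factorization p := by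
    have := ArithmeticFunction.cardFactors_eq_sum_factorization (n := n)
    rw [ArithmeticFunction.cardFactors_apply] at this
    exact this
  have h1 : ((n.primeFactorsList.length : ℝ) - (n.primeFactors.card : ℝ)) =
      ∑ p ∈ n.primeFactors, ∑ k ∈ Finset.Icc 2 L, if p ^ k ∣ n then (1:ℝ) else 0 := by
    rw [h0, Finset.card_eq_sum_ones]
    push_cast
    rw [← Finset.sum_sub_distrib]
    apply Finset.sum_congr rfl
    intro p hp
    have pp := Nat.prime_of_mem_primeFactors hp
    have pd := Nat.dvd_of_mem_primeFactors hp
    have hlt : n < p ^ (L + 1) := by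
      calc n ≤ N := hN
        _ < 2 ^ (L+1) := hL
        _ ≤ p ^ (L+1) := Nat.pow_le_pow_left pp.two_le _
    rw [Nat.factorization_eq_card_pow_dvd_of_lt pp hn hlt]
    have e : Finset.Ico 1 (L+1) = insert 1 (Finset.Icc 2 L) := by
      ext i; simp; omega
    rw [e, Finset.filter_insert, if_pos (by simpa using pd), Finset.card_insert_of_notMem (by simp),
      Finset.sum_boole]
    push_cast; ring
  rw [h1]
  have hle : ∀ p ∈ n.primeFactors, p ≤ N := fun p hp => (Nat.le_of_mem_primeFactors hp).trans hN
  rw [Finset.sum_subset (s₂ := (Finset.range (s + 1 + N)).filter Nat.Prime)]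
  · symm
    apply Finset.sum_subset
    · apply Finset.filter_subset_filter
      exact Finset.range_mono (by omega)
    · intro p hp hp2
      simp only [Finset.mem_filter, Finset.mem_range] at hp hp2
      apply Finset.sum_eq_zero
      intro k hk
      rw [if_neg]
      intro hd
      have hk2 := (Finset.mem_Icc.1 hk).1
      have h3 : p ^ 2 ≤ n := Nat.le_of_dvd hn ((pow_dvd_pow p hk2).trans hd)
      have h4 : s + 1 ≤ p := by
        by_contra hh
        exact hp2 ⟨by omega, hp.2⟩
      nlinarith
  · intro p hp
    simp only [Finset.mem_filter, Finset.mem_range]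
    have := hle p hp
    exact ⟨by omega, Nat.prime_of_mem_primeFactors hp⟩
  · intro p hp hp2
    simp only [Finset.mem_filter, Finset.mem_range] at hp
    apply Finset.sum_eq_zero
    intro k hk
    rw [if_neg]
    intro hd
    have hk2 := (Finset.mem_Icc.1 hk).1
    apply hp2
    rw [Nat.mem_primeFactors]
    exact ⟨hp.2, (dvd_pow_self p (by omega)).trans hd, by omega⟩

lemma total (N L s : ℕ) (hL1 : 1 ≤ L) (hL : N < 2 ^ (L + 1))
    (hs : N < (s + 1) * (s + 1)) :
    ∑ n ∈ Finset.Icc 1 N, ((n.primeFactorsList.length : ℝ) - (n.primeFactors.card : ℝ)) =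
      ∑ p ∈ (Finset.range (s + 1)).filter Nat.Prime,
        ∑ k ∈ Finset.Icc 2 L, ((N / p ^ k : ℕ) : ℝ) := by
  rw [Finset.sum_congr rfl (fun n hn => pointwise N n L s (Finset.mem_Icc.1 hn).1
    (Finset.mem_Icc.1 hn).2 hL1 hL hs), Finset.sum_comm]
  apply Finset.sum_congr rfl
  intro p _
  rw [Finset.sum_comm]
  apply Finset.sum_congr rfl
  intro k _
  rw [Finset.sum_boole, ← Nat.Ioc_filter_dvd_card_eq_div]
  rfl

lemma geo (p : ℝ) (hp : 2 ≤ p) (L : ℕ) (hL : 1 ≤ L) :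
    ∑ k ∈ Finset.Icc 2 L, 1 / p ^ k = 1 / (p * (p - 1)) - 1 / (p ^ L * (p - 1)) := by
  have h1 : p - 1 ≠ 0 := by linarith
  have h0 : p ≠ 0 := by linarith
  induction L, hL using Nat.le_induction with
  | base => simp
  | succ L hL ih =>
    rw [Finset.sum_Icc_succ_top (by omega), ih]
    field_simp
    ring

lemma Tp (x : ℝ) (hx : 0 ≤ x) (p L : ℕ) (hp : p.Prime) (hL1 : 1 ≤ L)
    (hL : ⌊x⌋₊ < 2 ^ (L + 1)) :
    ∑ k ∈ Finset.Icc 2 L, ((⌊x⌋₊ / p ^ k : ℕ) : ℝ) ≤ x * gP p ∧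
    x * gP p - (L + 1) ≤ ∑ k ∈ Finset.Icc 2 L, ((⌊x⌋₊ / p ^ k : ℕ) : ℝ) := by
  have hp2 : (2:ℝ) ≤ p := by exact_mod_cast hp.two_le
  have hp1 : (0:ℝ) < (p:ℝ) - 1 := by linarith
  have hp0 : (0:ℝ) < p := by linarith
  have hg : gP p = 1 / ((p:ℝ) * (p - 1)) := by simp [gP, hp]
  have hgeo := geo p hp2 L hL1
  have hfl : ∀ k, ((⌊x⌋₊ / p ^ k : ℕ) : ℝ) ≤ x * (1 / (p:ℝ) ^ k) ∧
      x * (1 / (p:ℝ) ^ k) - 1 ≤ ((⌊x⌋₊ / p ^ k : ℕ) : ℝ) := by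
    intro k
    have e : ⌊x⌋₊ / p ^ k = ⌊x * (1 / (p:ℝ) ^ k)⌋₊ := by
      rw [mul_one_div, ← Nat.cast_pow, Nat.floor_div_natCast]
    rw [e]
    constructor
    · exact Nat.floor_le (by positivity)
    · have := Nat.lt_floor_add_one (x * (1 / (p:ℝ) ^ k)); linarith
  constructor
  · calc _ ≤ ∑ k ∈ Finset.Icc 2 L, x * (1 / (p:ℝ) ^ k) := Finset.sum_le_sum fun k _ => (hfl k).1
      _ = x * (1 / (p * (p - 1)) - 1 / ((p:ℝ) ^ L * (p - 1))) := by rw [← Finset.mul_sum, hgeo]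
      _ ≤ x * gP p := by
        rw [hg]
        apply mul_le_mul_of_nonneg_left _ hx
        have : 0 ≤ 1 / ((p:ℝ) ^ L * (p - 1)) := by positivity
        linarith
  · have h1 : ∑ k ∈ Finset.Icc 2 L, (x * (1 / (p:ℝ) ^ k) - 1) ≤
        ∑ k ∈ Finset.Icc 2 L, ((⌊x⌋₊ / p ^ k : ℕ) : ℝ) := Finset.sum_le_sum fun k _ => (hfl k).2
    rw [Finset.sum_sub_distrib, ← Finset.mul_sum, hgeo] at h1
    simp only [Finset.sum_const, Nat.card_Icc, nsmul_eq_mul, mul_one] at h1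
    rw [← hg] at h1
    have h2 : ((L + 1 - 2 : ℕ) : ℝ) = L - 1 := by
      rw [Nat.cast_sub (by omega)]; push_cast; ring
    rw [h2] at h1
    have h3 : x < (p:ℝ) ^ (L+1) := by
      have a : ⌊x⌋₊ + 1 ≤ p ^ (L+1) := hL.trans_le (Nat.pow_le_pow_left hp.two_le _)
      have b : ((⌊x⌋₊ : ℝ) + 1) ≤ (p:ℝ) ^ (L+1) := by exact_mod_cast a
      linarith [Nat.lt_floor_add_one x]
    have h4 : x * (1 / ((p:ℝ) ^ L * (p - 1))) ≤ 2 := by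
      rw [mul_one_div, div_le_iff₀ (by positivity)]
      have : (0:ℝ) < (p:ℝ) ^ L := by positivity
      rw [pow_succ] at h3
      nlinarith
    linarith

theorem sum_bigOmega_sub_omega :
    ∃ C > (0:ℝ), ∀ᶠ x : ℝ in atTop,
      |(∑ n ∈ Finset.Icc 1 ⌊x⌋₊,
            ((n.primeFactorsList.length : ℝ) - (n.primeFactors.card : ℝ))) -
          x * ∑' p : Nat.Primes, 1 / (((p : ℕ) : ℝ) * (((p : ℕ) : ℝ) - 1))| ≤
        C * Real.sqrt x * Real.log x := by
  refine ⟨5, by norm_num, ?_⟩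
  filter_upwards [eventually_ge_atTop (4:ℝ), eventually_ge_atTop (Real.exp 1)] with x hx hxe
  have hx0 : (0:ℝ) ≤ x := by linarith
  have hlog : 1 ≤ Real.log x := by
    rw [Real.le_log_iff_exp_le (by linarith)]; exact hxe
  rw [gP_tsum]
  set N := ⌊x⌋₊ with hN
  have hN4 : 4 ≤ N := Nat.le_floor (by exact_mod_cast hx)
  set L := Nat.log 2 N with hLdef
  set s := Nat.sqrt N with hsdef
  have hL1 : 1 ≤ L := Nat.log_pos (by norm_num) (by omega)
  have hL : N < 2 ^ (L+1) := Nat.lt_pow_succ_log_self (by norm_num) N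
  have hs : N < (s+1)*(s+1) := Nat.lt_succ_sqrt N
  have hs1 : 1 ≤ s := Nat.le_sqrt.2 (by omega)
  rw [total N L s hL1 hL hs]
  have hNx : (N:ℝ) ≤ x := Nat.floor_le hx0
  have hxN : x < N + 1 := Nat.lt_floor_add_one x
  have hsx : (s:ℝ) ≤ √x := by
    apply Real.le_sqrt_of_sq_le
    have : s * s ≤ N := Nat.sqrt_le N
    have : (s:ℝ) * s ≤ N := by exact_mod_cast this
    nlinarith
  have hxs : √x ≤ s + 1 := by
    rw [Real.sqrt_le_left (by positivity)]
    have : (N:ℝ) + 1 ≤ (s+1)*(s+1) := by exact_mod_cast hs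
    nlinarith
  have hs1' : (1:ℝ) ≤ s := by exact_mod_cast hs1
  have hLx : (L:ℝ) ≤ 2 * Real.log x := by
    have a : (2:ℝ) ^ L ≤ x := by
      have : 2 ^ L ≤ N := Nat.pow_log_le_self 2 (by omega)
      have : (2:ℝ) ^ L ≤ N := by exact_mod_cast this
      linarith
    have b := Real.log_le_log (by positivity) a
    rw [Real.log_pow] at b
    have := Real.log_two_gt_d9
    have hLn : (0:ℝ) ≤ L := Nat.cast_nonneg L
    nlinarith
  have hG : ∑ i ∈ Finset.range (s+1), gP i = ∑ p ∈ (Finset.range (s+1)).filter Nat.Prime, gP p := by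
    rw [Finset.sum_filter]
    apply Finset.sum_congr rfl
    intro i _
    unfold gP
    split_ifs <;> rfl
  have hup : ∑' n, gP n ≤ ∑ i ∈ Finset.range (s+1), gP i + 1 / (s:ℝ) :=
    Real.tsum_le_of_sum_range_le gP_nonneg (gP_range s hs1)
  have hlo : ∑ i ∈ Finset.range (s+1), gP i ≤ ∑' n, gP n :=
    gP_summable.sum_le_tsum _ (fun i _ => gP_nonneg i)
  rw [hG] at hup hlo
  have hA : ∑ p ∈ (Finset.range (s + 1)).filter Nat.Prime,
        ∑ k ∈ Finset.Icc 2 L, ((N / p ^ k : ℕ) : ℝ) ≤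
      x * ∑ p ∈ (Finset.range (s+1)).filter Nat.Prime, gP p := by
    rw [Finset.mul_sum]
    exact Finset.sum_le_sum fun p hp => (Tp x hx0 p L (Finset.mem_filter.1 hp).2 hL1 hL).1
  have hB : x * ∑ p ∈ (Finset.range (s+1)).filter Nat.Prime, gP p - s * (L + 1) ≤
      ∑ p ∈ (Finset.range (s + 1)).filter Nat.Prime,
        ∑ k ∈ Finset.Icc 2 L, ((N / p ^ k : ℕ) : ℝ) := by
    have h1 := Finset.sum_le_sum (s := (Finset.range (s + 1)).filter Nat.Prime)
      fun p hp => (Tp x hx0 p L (Finset.mem_filter.1 hp).2 hL1 hL).2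
    rw [Finset.sum_sub_distrib, ← Finset.mul_sum, Finset.sum_const, nsmul_eq_mul] at h1
    have hc : ((Finset.range (s + 1)).filter Nat.Prime).card ≤ s := by
      have : (Finset.range (s + 1)).filter Nat.Prime ⊆ Finset.Icc 1 s := by
        intro p hp
        simp only [Finset.mem_filter, Finset.mem_range] at hp
        have := hp.2.one_lt
        rw [Finset.mem_Icc]; omega
      simpa using Finset.card_le_card this
    have hc' : (((Finset.range (s + 1)).filter Nat.Prime).card : ℝ) ≤ s := by exact_mod_cast hc
    have := mul_le_mul_of_nonneg_right hc' (show (0:ℝ) ≤ L + 1 by positivity)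
    linarith
  have hsq : √x * √x = x := Real.mul_self_sqrt hx0
  have hsq0 : 0 ≤ √x := Real.sqrt_nonneg x
  have hxd : x * (1 / (s:ℝ)) ≤ 2 * √x := by
    rw [mul_one_div, div_le_iff₀ (by linarith)]
    nlinarith
  have hup' := mul_le_mul_of_nonneg_left hup hx0
  have hlo' := mul_le_mul_of_nonneg_left hlo hx0
  rw [mul_add] at hup'
  have hf : (s:ℝ) * (L + 1) ≤ √x * (3 * Real.log x) := by
    apply mul_le_mul hsx (by linarith) (by positivity) hsq0
  have hf2 : √x ≤ √x * Real.log x := le_mul_of_one_le_right hsq0 hlog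
  rw [abs_le]
  constructor <;> nlinarith
end
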